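/- Let Γ = ℤ^6 ⋊ ℤ/12 where the generator of ℤ/12 acts on ℤ^6 by the matrix [[0,0,0,0,0,-1],[1,0,0,0,0,-1],[0,1,0,0,0,0],[0,0,1,0,0,1],[0,0,0,1,0,0],[0,0,0,0,1,-1]], and let G = ℤ/12, L = ℤ^6 with this action. Then there exists k ≥ 0 such that H^k(Γ, ℤ) is not isomorphic to ⊕_{i+j=k} H^i(G, H^j(L, ℤ)). -/

import Mathlib

open Matrix

namespace Crystal

/-- The lattice `ℤ^n`, written multiplicatively so that it can be a factor of a semidirect
product of groups. -/
abbrev Lat (n : ℕ) : Type := Multiplicative (Fin n → ℤ)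

/-- The invertible integer matrix determined by `M` with `M ^ (m + 1) = 1`. -/
def matUnit {n : ℕ} (M : Matrix (Fin n) (Fin n) ℤ) (m : ℕ) (hm : M ^ (m + 1) = 1) :
    (Matrix (Fin n) (Fin n) ℤ)ˣ :=
  ⟨M, M ^ m, by rw [← pow_succ']; exact hm, by rw [← pow_succ]; exact hm⟩

/-- Linear automorphisms of `ℤ^n` as multiplicative automorphisms of the multiplicative
version of `ℤ^n`. -/
def linToAut (n : ℕ) : ((Fin n → ℤ) ≃ₗ[ℤ] (Fin n → ℤ)) →* MulAut (Lat n) :=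
  MonoidHom.mk' (fun e => AddEquiv.toMultiplicative e.toAddEquiv) (fun _ _ => rfl)

/-- An invertible integer matrix acts on the (multiplicative) lattice `ℤ^n` by (left)
matrix-vector multiplication. -/
def glToAut (n : ℕ) : (Matrix (Fin n) (Fin n) ℤ)ˣ →* MulAut (Lat n) :=
  (linToAut n).comp
    ((LinearMap.GeneralLinearGroup.generalLinearEquiv ℤ (Fin n → ℤ)).toMonoidHom.comp
      (Matrix.GeneralLinearGroup.toLin).toMonoidHom)

/-- The homomorphism from `ℤ/m` (written multiplicatively) to a group `G` sending the
generator `1` to a chosen element `α` satisfying `α ^ m = 1`. -/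
def zmodHom {G : Type*} [Group G] (m : ℕ) [NeZero m] (α : G) (hα : α ^ m = 1) :
    Multiplicative (ZMod m) →* G :=
  MonoidHom.mk' (fun g => α ^ (g.toAdd.val)) (by
    intro a b
    show α ^ (ZMod.val (a.toAdd + b.toAdd)) = α ^ (ZMod.val a.toAdd) * α ^ (ZMod.val b.toAdd)
    rw [ZMod.val_add, ← pow_eq_pow_mod _ hα, pow_add])

/-- The action of `ℤ/q` on the lattice `ℤ^n` in which the generator `1` of `ℤ/q` acts by left
multiplication by the integer matrix `M`; `M` is required to satisfy `M ^ q = 1`. -/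
def matAction {n : ℕ} (q : ℕ) [NeZero q] (M : Matrix (Fin n) (Fin n) ℤ)
    (hq : M ^ q = 1) : Multiplicative (ZMod q) →* MulAut (Lat n) :=
  zmodHom q (glToAut n (matUnit M (q - 1) (by
      rwa [Nat.sub_add_cancel (Nat.one_le_iff_ne_zero.2 (NeZero.ne q))])))
    (by
      rw [← map_pow]
      convert map_one (glToAut n)
      ext i j
      rw [Units.val_pow_eq_pow_val]
      simp [matUnit, hq])

/-- The crystallographic group `ℤ^n ⋊ ℤ/q` in which the generator `1` of `ℤ/q` acts on the
lattice `ℤ^n` by left multiplication by the integer matrix `M` (with `M ^ q = 1`). -/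
abbrev Crys {n : ℕ} (q : ℕ) [NeZero q] (M : Matrix (Fin n) (Fin n) ℤ) (hq : M ^ q = 1) : Type :=
  SemidirectProduct (Lat n) (Multiplicative (ZMod q)) (matAction q M hq)


open CategoryTheory groupCohomology

variable {k : Type} [CommRing k]

lemma comp_contractNth {G H : Type*} [Monoid G] [Monoid H] (f : G →* H) {n : ℕ}
    (j : Fin (n + 1)) (g : Fin (n + 1) → G) (i : Fin n) :
    f (Fin.contractNth j (· * ·) g i) = Fin.contractNth j (· * ·) (fun l => f (g l)) i := by
  rcases lt_trichotomy (i : ℕ) j with h | h | h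
  · rw [Fin.contractNth_apply_of_lt _ _ _ _ h, Fin.contractNth_apply_of_lt _ _ _ _ h]
  · rw [Fin.contractNth_apply_of_eq _ _ _ _ h, Fin.contractNth_apply_of_eq _ _ _ _ h,
      _root_.map_mul]
  · rw [Fin.contractNth_apply_of_gt _ _ _ _ h, Fin.contractNth_apply_of_gt _ _ _ _ h]

/-- The map of inhomogeneous cochain complexes induced (contravariantly in the group,
covariantly in the coefficients) by a group homomorphism `f : H →* G` together with a
compatible linear map `τ : A → B` of coefficients. -/
def cochainsMap {G H : Type} [Group G] [Group H] (A : Rep k G) (B : Rep k H)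
    (f : H →* G) (τ : A →ₗ[k] B)
    (hcomp : ∀ (h : H) (a : A), τ (A.ρ (f h) a) = B.ρ h (τ a)) :
    inhomogeneousCochains A ⟶ inhomogeneousCochains B where
  f n := ModuleCat.ofHom
    { toFun := fun F v => τ (F (fun i => f (v i)))
      map_add' := fun x y => by funext v; simp
      map_smul' := fun r x => by funext v; simp }
  comm' i j hij := by
    have hij' : i + 1 = j := hij
    subst hij'
    rw [inhomogeneousCochains.d_def, inhomogeneousCochains.d_def]
    ext F v
    show (inhomogeneousCochains.d B i) (fun w => τ (F (fun l => f (w l)))) v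
      = τ ((inhomogeneousCochains.d A i) F (fun l => f (v l)))
    simp only [inhomogeneousCochains.d_hom_apply, map_add, map_sum, _root_.map_smul]
    congr 1
    · exact (hcomp (v 0) _).symm
    · refine Finset.sum_congr rfl fun j' _ => ?_
      have hc : (fun l => f (j'.contractNth (· * ·) v l))
          = j'.contractNth (· * ·) (fun l => f (v l)) := by
        funext l
        exact comp_contractNth f j' v l
      rw [hc]

lemma cochainsMap_eq_id {G : Type} [Group G] (A : Rep k G) (f : G →* G) (τ : A →ₗ[k] A)
    (hcomp : ∀ (h : G) (a : A), τ (A.ρ (f h) a) = A.ρ h (τ a))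
    (hf : ∀ x, f x = x) (hτ : ∀ a, τ a = a) :
    cochainsMap A A f τ hcomp = 𝟙 _ := by
  apply HomologicalComplex.Hom.ext
  funext n
  ext F v
  show τ (F (fun i => f (v i))) = F v
  simp only [hf, hτ]

lemma cochainsMap_comp {G H K : Type} [Group G] [Group H] [Group K]
    (A : Rep k G) (B : Rep k H) (C : Rep k K)
    (f₁ : H →* G) (τ₁ : A →ₗ[k] B) (h₁ : ∀ (h : H) (a : A), τ₁ (A.ρ (f₁ h) a) = B.ρ h (τ₁ a))
    (f₂ : K →* H) (τ₂ : B →ₗ[k] C) (h₂ : ∀ (h : K) (a : B), τ₂ (B.ρ (f₂ h) a) = C.ρ h (τ₂ a))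
    (f₃ : K →* G) (τ₃ : A →ₗ[k] C) (h₃ : ∀ (h : K) (a : A), τ₃ (A.ρ (f₃ h) a) = C.ρ h (τ₃ a))
    (hf : ∀ x, f₁ (f₂ x) = f₃ x) (hτ : ∀ a, τ₂ (τ₁ a) = τ₃ a) :
    cochainsMap A B f₁ τ₁ h₁ ≫ cochainsMap B C f₂ τ₂ h₂ = cochainsMap A C f₃ τ₃ h₃ := by
  apply HomologicalComplex.Hom.ext
  funext n
  ext F v
  show τ₂ (τ₁ (F (fun i => f₁ (f₂ (v i))))) = τ₃ (F (fun i => f₃ (v i)))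
  simp only [hf]
  exact hτ _

/-- Given an action `φ` of a group `G` on a group `L` and a representation `ψ` of `G` on a
`k`-module `V`, this is `H^j(L, V)` (with `L` acting trivially on the coefficients `V`),
endowed with the `G`-action functorially induced by the action of `G` on `L` and on `V`:
`g` acts via the conjugation automorphism `φ g⁻¹` of `L` and via `ψ g` on `V`. -/
noncomputable def cohRep {G L V : Type} [Group G] [Group L] [AddCommGroup V] [Module k V]
    (φ : G →* MulAut L) (ψ : Representation k G V) (j : ℕ) : Rep k G :=
  Rep.of (X := groupCohomology (Rep.trivial k L V) j)
    { toFun := fun g => ModuleCat.Hom.hom <| HomologicalComplex.homologyMap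
        (cochainsMap (Rep.trivial k L V) (Rep.trivial k L V) (φ g⁻¹).toMonoidHom (ψ g)
          (fun _ _ => rfl)) j
      map_one' := by
        have h := cochainsMap_eq_id (Rep.trivial k L V) (φ 1⁻¹).toMonoidHom (ψ 1)
          (fun _ _ => rfl) (fun x => by simp) (fun a => by simp)
        exact congrArg ModuleCat.Hom.hom
          ((congrArg (fun c => HomologicalComplex.homologyMap c j) h).trans
            (HomologicalComplex.homologyMap_id _ j))
      map_mul' := fun g₁ g₂ => by
        have h := cochainsMap_comp (Rep.trivial k L V) (Rep.trivial k L V) (Rep.trivial k L V)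
          (φ g₂⁻¹).toMonoidHom (ψ g₂) (fun _ _ => rfl)
          (φ g₁⁻¹).toMonoidHom (ψ g₁) (fun _ _ => rfl)
          (φ (g₁ * g₂)⁻¹).toMonoidHom (ψ (g₁ * g₂)) (fun _ _ => rfl)
          (fun x => by simp [_root_.mul_inv_rev]) (fun a => by simp)
        rw [← h, HomologicalComplex.homologyMap_comp]
        rfl }


/-- `H^i(G, H^j(L, ℤ))`: the `i`-th cohomology of the cyclic group `ℤ/q` with coefficients in
the `j`-th cohomology of the lattice `ℤ^n` (with trivial `ℤ` coefficients), where the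
`ℤ/q`-action on `H^j(ℤ^n, ℤ)` is the one functorially induced by the matrix action on the
lattice. -/
noncomputable abbrev cohOfCoh {n : ℕ} (q : ℕ) [NeZero q] (M : Matrix (Fin n) (Fin n) ℤ)
    (hq : M ^ q = 1) (i j : ℕ) : ModuleCat ℤ :=
  groupCohomology
    (cohRep (matAction q M hq) (1 : Representation ℤ (Multiplicative (ZMod q)) ℤ) j) i

/-- `H^k(Γ, ℤ)` for `Γ = ℤ^n ⋊ ℤ/q`, with trivial coefficients `ℤ`. -/
noncomputable abbrev cohCrys {n : ℕ} (q : ℕ) [NeZero q] (M : Matrix (Fin n) (Fin n) ℤ)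
    (hq : M ^ q = 1) (k : ℕ) : ModuleCat ℤ :=
  groupCohomology (Rep.trivial ℤ (Crys q M hq) ℤ) k

end Crystal

/-- The holonomy matrix. -/
def holM : Matrix (Fin 6) (Fin 6) ℤ := !![0, 0, 0, 0, 0, -1; 1, 0, 0, 0, 0, -1; 0, 1, 0, 0, 0, 0; 0, 0, 1, 0, 0, 1; 0, 0, 0, 1, 0, 0; 0, 0, 0, 0, 1, -1]

lemma holM_pow : holM ^ 12 = 1 := by decide

/-- `H^k(ℤ^6 ⋊ ℤ/12, ℤ)`, where the generator of `ℤ/12` acts on `ℤ^6` by left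
multiplication by the matrix `holM`. -/
noncomputable abbrev H (k : ℕ) : ModuleCat ℤ := Crystal.cohCrys 12 holM holM_pow k

/-- `H^i(ℤ/12, H^j(ℤ^6, ℤ))`, with the functorially induced action on coefficients. -/
noncomputable abbrev Hc (i j : ℕ) : ModuleCat ℤ := Crystal.cohOfCoh 12 holM holM_pow i j

open Matrix

namespace Crystal

/-- The group `Γ`. -/
abbrev Gam : Type := Crys 12 holM holM_pow

/-- Curried homogeneous cochains. -/
def Co : ℕ → Type
  | 0 => ℤ
  | n + 1 => Gam → Co n

instance instCo : ∀ n, AddCommGroup (Co n)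
  | 0 => inferInstanceAs (AddCommGroup ℤ)
  | n + 1 => @Pi.addCommGroup Gam (fun _ => Co n) (fun _ => instCo n)

lemma Co.add_apply {n : ℕ} (f g : Co (n + 1)) (y : Gam) : (f + g) y = (f y + g y : Co n) := rfl
lemma Co.sub_apply {n : ℕ} (f g : Co (n + 1)) (y : Gam) : (f - g) y = (f y - g y : Co n) := rfl
lemma Co.neg_apply {n : ℕ} (f : Co (n + 1)) (y : Gam) : (- f) y = (- f y : Co n) := rfl
lemma Co.zero_apply {n : ℕ} (y : Gam) : (0 : Co (n + 1)) y = (0 : Co n) := rfl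

/-- evaluation as a homomorphism -/
def evh {n : ℕ} (y : Gam) : Co (n + 1) →+ Co n where
  toFun f := f y
  map_zero' := rfl
  map_add' _ _ := rfl

lemma evh_apply {n : ℕ} (y : Gam) (f : Co (n + 1)) : evh y f = f y := rfl
lemma Co.zsmul_apply {n : ℕ} (m : ℤ) (f : Co (n + 1)) (y : Gam) :
    (m • f) y = (m • f y : Co n) := map_zsmul (evh y) m f
lemma Co.nsmul_apply {n : ℕ} (m : ℕ) (f : Co (n + 1)) (y : Gam) :
    (m • f) y = (m • f y : Co n) := map_nsmul (evh y) m f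
lemma Co.sum_apply {n : ℕ} {ι : Type} (s : Finset ι) (f : ι → Co (n + 1)) (y : Gam) :
    (∑ i ∈ s, f i) y = (∑ i ∈ s, f i y : Co n) := map_sum (evh y) f s

lemma Co.ext {n : ℕ} {f g : Co (n + 1)} (h : ∀ y, f y = g y) : f = g := funext h

lemma Co.torsion_free : ∀ {n : ℕ} {N : ℤ} (_ : N ≠ 0) {f : Co n} (_ : N • f = 0), f = 0
  | 0, N, hN, f, h => by
      have h1 : ∀ f : ℤ, N • f = 0 → f = 0 := fun f hf => (smul_eq_zero.1 hf).resolve_left hN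
      exact h1 f h
  | n + 1, N, hN, f, h => by
      apply Co.ext
      intro y
      apply Co.torsion_free hN
      rw [← Co.zsmul_apply, h]; rfl

/-- The differential. -/
def dd : ∀ n, Co n →+ Co (n + 1)
  | 0 => { toFun := fun c _ => c, map_zero' := rfl, map_add' := fun _ _ => rfl }
  | n + 1 =>
    { toFun := fun f y => f - dd n (f y)
      map_zero' := by
        apply Co.ext; intro y
        show (0 : Co (n + 1)) - dd n ((0 : Co (n + 1)) y) = 0
        rw [Co.zero_apply, map_zero, sub_zero]
      map_add' := fun f g => by
        apply Co.ext; intro y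
        show f + g - dd n ((f + g) y) = (f - dd n (f y)) + (g - dd n (g y))
        rw [Co.add_apply, map_add]; abel }

lemma dd_zero_apply (c : Co 0) (y : Gam) : dd 0 c y = c := rfl
lemma dd_succ_apply {n : ℕ} (f : Co (n + 1)) (y : Gam) : dd (n + 1) f y = f - dd n (f y) := rfl

lemma dd_dd : ∀ {n : ℕ} (f : Co n), dd (n + 1) (dd n f) = 0
  | 0, f => by
      apply Co.ext; intro y
      rw [dd_succ_apply, dd_zero_apply, sub_self]; rfl
  | n + 1, f => by
      apply Co.ext; intro y
      rw [dd_succ_apply, dd_succ_apply, map_sub, dd_dd (f y), sub_zero, sub_self]; rfl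

lemma exact_dd {n : ℕ} {f : Co (n + 1)} (h : dd (n + 1) f = 0) (y : Gam) : f = dd n (f y) := by
  have := congrFun h y
  rw [dd_succ_apply] at this
  exact sub_eq_zero.1 this

/-- pullback -/
def pull (σ : Gam → Gam) : ∀ n, Co n →+ Co n
  | 0 => AddMonoidHom.id _
  | n + 1 =>
    { toFun := fun f y => pull σ n (f (σ y))
      map_zero' := by
        apply Co.ext; intro y
        exact map_zero (pull σ n)
      map_add' := fun f g => by
        apply Co.ext; intro y
        exact map_add (pull σ n) _ _ }

lemma pull_zero_apply (σ : Gam → Gam) (c : Co 0) : pull σ 0 c = c := rfl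
lemma pull_succ_apply (σ : Gam → Gam) {n : ℕ} (f : Co (n + 1)) (y : Gam) :
    pull σ (n + 1) f y = pull σ n (f (σ y)) := rfl

lemma pull_pull (σ σ' : Gam → Gam) : ∀ {n : ℕ} (f : Co n),
    pull σ n (pull σ' n f) = pull (σ' ∘ σ) n f
  | 0, _ => rfl
  | n + 1, f => by
      apply Co.ext; intro y
      rw [pull_succ_apply, pull_succ_apply, pull_succ_apply, pull_pull]; rfl

lemma pull_id : ∀ {n : ℕ} (f : Co n), pull id n f = f
  | 0, _ => rfl
  | n + 1, f => by
      apply Co.ext; intro y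
      rw [pull_succ_apply, pull_id]; rfl

lemma pull_dd (σ : Gam → Gam) : ∀ {n : ℕ} (f : Co n),
    pull σ (n + 1) (dd n f) = dd n (pull σ n f)
  | 0, _ => rfl
  | n + 1, f => by
      apply Co.ext; intro y
      rw [pull_succ_apply, dd_succ_apply, dd_succ_apply, map_sub, pull_dd σ (f (σ y)),
        pull_succ_apply]

/-- left multiplication by `g`. -/
def lm (g : Gam) : Gam → Gam := fun x => g * x

/-- action of group element on cochains (a right action). -/
def pl (g : Gam) (n : ℕ) : Co n →+ Co n := pull (lm g) n

lemma pl_pl (g h : Gam) {n : ℕ} (f : Co n) : pl g n (pl h n f) = pl (h * g) n f := by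
  unfold pl
  rw [pull_pull]
  congr 2
  funext x
  simp [lm, mul_assoc]

lemma pl_one {n : ℕ} (f : Co n) : pl 1 n f = f := by
  unfold pl
  convert pull_id f
  funext x
  simp [lm]

lemma pl_dd (g : Gam) {n : ℕ} (f : Co n) : pl g (n + 1) (dd n f) = dd n (pl g n f) :=
  pull_dd _ f

lemma pl_apply (g : Gam) {n : ℕ} (f : Co (n + 1)) (y : Gam) :
    pl g (n + 1) f y = pl g n (f (g * y)) := rfl

lemma pl_cancel (g : Gam) {n : ℕ} (f : Co n) : pl g n (pl g⁻¹ n f) = f := by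
  rw [pl_pl, inv_mul_cancel, pl_one]
lemma pl_cancel' (g : Gam) {n : ℕ} (f : Co n) : pl g⁻¹ n (pl g n f) = f := by
  rw [pl_pl, mul_inv_cancel, pl_one]

/-- translations. -/
def tr (a : Fin 6 → ℤ) : Gam := SemidirectProduct.inl (Multiplicative.ofAdd a)

/-- coordinates -/
def xi (i : Fin 6) (x : Gam) : ℤ := Multiplicative.toAdd x.left i

/-- the generator of the point group -/
def tg : Gam := SemidirectProduct.inr (Multiplicative.ofAdd 1)

/-- the point group coordinate -/
def pg (x : Gam) : ZMod 12 := Multiplicative.toAdd x.right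

lemma tr_add (a b : Fin 6 → ℤ) : tr (a + b) = tr a * tr b := by
  unfold tr; rw [ofAdd_add, map_mul]
lemma tr_zero : tr 0 = 1 := by
  unfold tr; rw [ofAdd_zero, map_one]
lemma tr_neg (a : Fin 6 → ℤ) : tr (-a) = (tr a)⁻¹ := by
  unfold tr; rw [ofAdd_neg, map_inv]
lemma xi_tr (a : Fin 6 → ℤ) (i : Fin 6) (x : Gam) : xi i (tr a * x) = a i + xi i x := by
  simp [xi, tr]
lemma pg_tr (a : Fin 6 → ℤ) (x : Gam) : pg (tr a * x) = pg x := by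
  simp [pg, tr]
lemma pg_tg (x : Gam) : pg (tg * x) = 1 + pg x := by
  simp [pg, tg]

lemma matAction_one (v : Fin 6 → ℤ) :
    matAction 12 holM holM_pow (Multiplicative.ofAdd 1) (Multiplicative.ofAdd v)
      = Multiplicative.ofAdd (holM *ᵥ v) := by
  have : (ZMod.val (1 : ZMod 12)) = 1 := rfl
  show ((_ : MulAut (Lat 6)) ^ (ZMod.val (1 : ZMod 12))) _ = _
  rw [this, pow_one]
  rfl

lemma xi_tg (i : Fin 6) (x : Gam) : xi i (tg * x) = ∑ j, holM i j * xi j x := by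
  have : (tg * x).left = matAction 12 holM holM_pow (Multiplicative.ofAdd 1) x.left := by
    simp [tg]
  unfold xi
  rw [this]
  exact congrFun (congrArg Multiplicative.toAdd
    (matAction_one (Multiplicative.toAdd x.left))) i

lemma tg_tr (a : Fin 6 → ℤ) : tg * tr a = tr (holM *ᵥ a) * tg := by
  apply SemidirectProduct.ext
  · simp only [tg, tr, SemidirectProduct.mul_left, SemidirectProduct.left_inr,
      SemidirectProduct.right_inr, SemidirectProduct.left_inl, one_mul,
      SemidirectProduct.right_inl, map_one, mul_one]
    exact matAction_one a
  · simp [tg, tr]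

lemma tg_pow : tg ^ 12 = 1 := by
  unfold tg
  rw [← map_pow, ← ofAdd_nsmul]
  have : (12 • (1 : ZMod 12)) = 0 := by decide
  rw [this, ofAdd_zero, map_one]

lemma gam_gen (x : Gam) : ∃ (a : Fin 6 → ℤ) (m : ℕ), x = tr a * tg ^ m := by
  refine ⟨Multiplicative.toAdd x.left, (pg x).val, ?_⟩
  conv_lhs => rw [← SemidirectProduct.inl_left_mul_inr_right x]
  unfold tr tg
  rw [← map_pow, ← ofAdd_nsmul]
  congr 2
  show _ = Multiplicative.ofAdd _
  rw [nsmul_eq_mul, mul_one, ZMod.natCast_zmod_val]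
  rfl

end Crystal

open Matrix

namespace Crystal

/-- cochains invariant under the first `k` coordinate translations -/
def Inv (k n : ℕ) : AddSubgroup (Co n) where
  carrier := {f | ∀ a : Fin 6 → ℤ, (∀ i : Fin 6, k ≤ i.val → a i = 0) → pl (tr a) n f = f}
  zero_mem' := fun a _ => map_zero _
  add_mem' := fun {f g} hf hg a ha => by rw [map_add, hf a ha, hg a ha]
  neg_mem' := fun {f} hf a ha => by rw [map_neg, hf a ha]

lemma mem_Inv {k n : ℕ} {f : Co n} : f ∈ Inv k n ↔
  ∀ a : Fin 6 → ℤ, (∀ i : Fin 6, k ≤ i.val → a i = 0) → pl (tr a) n f = f := Iff.rfl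

lemma Inv_zero {n : ℕ} (f : Co n) : f ∈ Inv 0 n := fun a ha => by
  have : a = 0 := funext fun i => ha i (Nat.zero_le _)
  rw [this, tr_zero, pl_one]

lemma Inv_mono {k n : ℕ} {f : Co n} (h : f ∈ Inv (k + 1) n) : f ∈ Inv k n :=
  fun a ha => h a fun i hi => ha i (by omega)

lemma pl_tr_comm (a b : Fin 6 → ℤ) {n : ℕ} (f : Co n) :
    pl (tr a) n (pl (tr b) n f) = pl (tr b) n (pl (tr a) n f) := by
  rw [pl_pl, pl_pl, ← tr_add, ← tr_add, add_comm]

lemma Inv_pl {k n : ℕ} {f : Co n} (h : f ∈ Inv k n) (b : Fin 6 → ℤ) : pl (tr b) n f ∈ Inv k n :=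
  fun a ha => by rw [pl_tr_comm, h a ha]

lemma Inv_dd {k n : ℕ} {f : Co n} (h : f ∈ Inv k n) : dd n f ∈ Inv k (n + 1) :=
  fun a ha => by rw [pl_dd, h a ha]

/-- unit vector -/
def ev (k : Fin 6) : Fin 6 → ℤ := Pi.single k 1

/-- translation by unit vector -/
def st (k : Fin 6) (n : ℕ) : Co n →+ Co n := pl (tr (ev k)) n

lemma Inv_succ {n : ℕ} {k : Fin 6} {f : Co n} (h : f ∈ Inv k n) (h' : st k n f = f) :
    f ∈ Inv (k + 1) n := by
  have key : ∀ m : ℕ, pl (tr ((m : ℤ) • ev k)) n f = f := by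
    intro m
    induction m with
    | zero => simp [tr_zero, pl_one]
    | succ m ih =>
      have : ((m + 1 : ℕ) : ℤ) • ev k = ev k + (m : ℤ) • ev k := by
        push_cast; rw [add_smul, one_smul, add_comm]
      rw [this, tr_add, ← pl_pl]
      rw [show pl (tr (ev k)) n f = f from h', ih]
  have key2 : ∀ m : ℤ, pl (tr (m • ev k)) n f = f := by
    intro m
    obtain ⟨m, rfl | rfl⟩ := m.eq_nat_or_neg
    · exact key m
    · conv_lhs => rw [← key m]
      rw [neg_smul, tr_neg, pl_cancel']
  intro a ha
  have e : a = (a - a k • ev k) + a k • ev k := by abel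
  rw [e, tr_add, ← pl_pl, h, key2]
  intro i hi
  by_cases hik : i = k
  · subst hik; simp [ev]
  · have : a i = 0 := ha i (by
      have : i.val ≠ k.val := fun h => hik (Fin.ext h)
      omega)
    simp [ev, this, hik]

/-- evaluate a family of cochains on the diagonal of the first argument -/
def diag {n : ℕ} (S : Gam → Co (n + 1)) : Co (n + 1) := fun y => S y y

lemma diag_apply {n : ℕ} (S : Gam → Co (n + 1)) (y : Gam) : diag S y = S y y := rfl

lemma surj {n : ℕ} (k : Fin 6) {f : Co (n + 1)} (h : f ∈ Inv k (n + 1)) :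
    ∃ g ∈ Inv k (n + 1), st k (n + 1) g - g = f := by
  let T : Equiv.Perm (Co (n + 1)) :=
    { toFun := fun c => pl (tr (ev k))⁻¹ (n + 1) (c + f)
      invFun := fun c => pl (tr (ev k)) (n + 1) c - f
      left_inv := fun c => by simp only [pl_cancel, add_sub_cancel_right]
      right_inv := fun c => by simp only [sub_add_cancel, pl_cancel'] }
  let S : ℤ → Co (n + 1) := fun m => (T ^ m) 0
  have hS : ∀ m, st k (n + 1) (S (m + 1)) = S m + f := by
    intro m
    have : S (m + 1) = T (S m) := by
      show (T ^ (m + 1)) 0 = T ((T ^ m) 0)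
      rw [add_comm m 1, _root_.zpow_add, zpow_one]; rfl
    rw [this]
    exact pl_cancel _ _
  have hI : ∀ m, S m ∈ Inv k (n + 1) := by
    intro m
    induction m using Int.induction_on with
    | zero => exact zero_mem _
    | succ m ih =>
      have h1 : S (m + 1) = pl (tr (ev k))⁻¹ (n + 1) (S m + f) := by
        rw [← hS]; exact (pl_cancel' _ _).symm
      rw [h1, ← tr_neg]
      exact Inv_pl (add_mem ih h) _
    | pred m ih =>
      have h1 := hS (-m - 1)
      rw [sub_add_cancel] at h1
      have h2 : S (-m - 1) = st k (n + 1) (S (-m)) - f := by rw [h1]; abel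
      rw [h2]
      exact sub_mem (Inv_pl ih _) h
  refine ⟨diag fun y => S (xi k y), ?_, ?_⟩
  · intro a ha
    apply Co.ext; intro y
    rw [pl_apply, diag_apply, diag_apply, xi_tr, ha k le_rfl, zero_add, ← pl_apply,
      hI (xi k y) a ha]
  · apply Co.ext; intro y
    rw [Co.sub_apply, st, pl_apply, diag_apply, diag_apply, xi_tr, ← pl_apply]
    have h3 : pl (tr (ev k)) (n + 1) (S (xi k y + 1)) = _ := hS (xi k y)
    have h4 : ev k k = 1 := by simp [ev]
    rw [h4, add_comm 1, h3, Co.add_apply]; abel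

/-- invariant coboundaries -/
def Bd (k : ℕ) : ∀ j, AddSubgroup (Co (j + 1))
  | 0 => ⊥
  | j + 1 => (Inv k (j + 1)).map (dd (j + 1))

lemma mem_Bd_succ {k j : ℕ} {f : Co (j + 2)} :
    f ∈ Bd k (j + 1) ↔ ∃ w ∈ Inv k (j + 1), dd (j + 1) w = f := Iff.rfl
lemma mem_Bd_zero {k : ℕ} {f : Co 1} : f ∈ Bd k 0 ↔ f = 0 := Iff.rfl

lemma Bd_cocycle {k : ℕ} : ∀ {j : ℕ} {f : Co (j + 1)}, f ∈ Bd k j → dd (j + 1) f = 0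
  | 0, f, h => by rw [mem_Bd_zero.1 h, map_zero]
  | j + 1, f, h => by
      obtain ⟨w, _, rfl⟩ := h
      exact dd_dd _

lemma Bd_Inv {k : ℕ} : ∀ {j : ℕ} {f : Co (j + 1)}, f ∈ Bd k j → f ∈ Inv k (j + 1)
  | 0, f, h => by rw [mem_Bd_zero.1 h]; exact zero_mem _
  | j + 1, f, h => by
      obtain ⟨w, hw, rfl⟩ := h
      exact Inv_dd hw

lemma Bd_surj {k : Fin 6} : ∀ {j : ℕ} {f : Co (j + 1)}, f ∈ Bd k j →
    ∃ g ∈ Bd k j, st k (j + 1) g - g = f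
  | 0, f, h => ⟨0, zero_mem _, by rw [mem_Bd_zero.1 h, map_zero, sub_zero]⟩
  | j + 1, f, h => by
      obtain ⟨w, hw, rfl⟩ := h
      obtain ⟨g, hg, rfl⟩ := surj k hw
      refine ⟨dd _ g, ⟨g, hg, rfl⟩, ?_⟩
      rw [map_sub]
      congr 1
      exact pl_dd _ _

lemma Bd_st {k : ℕ} (i : Fin 6) : ∀ {j : ℕ} {f : Co (j + 1)}, f ∈ Bd k j → st i (j + 1) f ∈ Bd k j
  | 0, f, h => by rw [mem_Bd_zero.1 h, map_zero]; exact zero_mem _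
  | j + 1, f, h => by
      obtain ⟨w, hw, rfl⟩ := h
      exact ⟨st i _ w, Inv_pl hw _, (pl_dd _ _).symm⟩

/-- multiply by a coordinate of the first point -/
def mulxi (i : Fin 6) {n : ℕ} : Co (n + 1) →+ Co (n + 1) where
  toFun f y := xi i y • f y
  map_zero' := Co.ext fun _ => smul_zero _
  map_add' _ _ := Co.ext fun _ => smul_add _ _ _

lemma mulxi_apply (i : Fin 6) {n : ℕ} (f : Co (n + 1)) (y : Gam) :
    mulxi i f y = xi i y • f y := rfl

lemma dd_mulxi (i : Fin 6) {n : ℕ} {f : Co (n + 1)} (h : dd (n + 1) f = 0) (y0 y1 : Gam) :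
    dd (n + 1) (mulxi i f) y0 y1 = (xi i y1 - xi i y0) • f y1 := by
  rw [dd_succ_apply, Co.sub_apply, mulxi_apply, mulxi_apply, map_zsmul, ← exact_dd h,
    Co.zsmul_apply, sub_smul]

lemma pl_mulxi (i : Fin 6) {n : ℕ} (f : Co (n + 1)) (a : Fin 6 → ℤ) :
    pl (tr a) (n + 1) (mulxi i f)
      = a i • pl (tr a) (n + 1) f + mulxi i (pl (tr a) (n + 1) f) := by
  apply Co.ext; intro y
  rw [pl_apply, mulxi_apply, map_zsmul, xi_tr, add_smul, ← pl_apply, Co.add_apply, mulxi_apply,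
    Co.zsmul_apply]

/-- tensors -/
def Kt : ℕ → Type
  | 0 => ℤ
  | n + 1 => Fin 6 → Kt n

instance instKt : ∀ n, AddCommGroup (Kt n)
  | 0 => inferInstanceAs (AddCommGroup ℤ)
  | n + 1 => @Pi.addCommGroup (Fin 6) (fun _ => Kt n) (fun _ => instKt n)

/-- the cocycle of a tensor -/
def form : ∀ j, Kt j →+ Co (j + 1)
  | 0 => dd 0
  | j + 1 =>
    { toFun := fun c => ∑ i, dd (j + 1) (mulxi i (form j (c i)))
      map_zero' := by
        apply Finset.sum_eq_zero
        intro i _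
        have : form j ((0 : Kt (j + 1)) i) = 0 := map_zero (form j)
        rw [this, map_zero, map_zero]
      map_add' := fun c c' => by
        rw [← Finset.sum_add_distrib]
        refine Finset.sum_congr rfl fun i _ => ?_
        have : form j ((c + c' : Kt (j + 1)) i) = form j (c i) + form j (c' i) :=
          map_add (form j) _ _
        rw [this, map_add, map_add] }

lemma form_succ (j : ℕ) (c : Kt (j + 1)) :
    form (j + 1) c = ∑ i, dd (j + 1) (mulxi i (form j (c i))) := rfl

lemma form_cocycle : ∀ {j : ℕ} (c : Kt j), dd (j + 1) (form j c) = 0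
  | 0, _ => dd_dd _
  | j + 1, c => by
      rw [form_succ, map_sum]
      exact Finset.sum_eq_zero fun i _ => dd_dd _

lemma form_zero_apply (c : Kt 0) (y : Gam) : form 0 c y = c := rfl

lemma form_apply {j : ℕ} (c : Kt (j + 1)) (y0 y1 : Gam) :
    form (j + 1) c y0 y1 = ∑ i, (xi i y1 - xi i y0) • form j (c i) y1 := by
  rw [form_succ, Co.sum_apply, Co.sum_apply]
  exact Finset.sum_congr rfl fun i _ => dd_mulxi i (form_cocycle _) _ _

lemma form_pl (a : Fin 6 → ℤ) : ∀ {j : ℕ} (c : Kt j), pl (tr a) (j + 1) (form j c) = form j c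
  | 0, _ => rfl
  | j + 1, c => by
      rw [form_succ, map_sum]
      refine Finset.sum_congr rfl fun i _ => ?_
      rw [pl_dd, pl_mulxi, form_pl a (c i), map_add, map_zsmul, form_cocycle, smul_zero, zero_add]

lemma form_Inv (k : ℕ) {j : ℕ} (c : Kt j) : form j c ∈ Inv k (j + 1) := fun a _ => form_pl a c

/-- single tensor -/
def Kt.single {j : ℕ} (i : Fin 6) (c : Kt j) : Kt (j + 1) := fun l => if l = i then c else 0

lemma form_single {j : ℕ} (i : Fin 6) (c : Kt j) :
    form (j + 1) (Kt.single i c) = dd (j + 1) (mulxi i (form j c)) := by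
  rw [form_succ, Finset.sum_eq_single i]
  · simp [Kt.single]
  · intro l _ hl
    simp [Kt.single, hl]
  · simp

theorem gen : ∀ (k : ℕ) (_ : k ≤ 6) (j : ℕ) (z : Co (j + 1)), z ∈ Inv k (j + 1) →
    dd (j + 1) z = 0 → ∃ c : Kt j, z - form j c ∈ Bd k j
  | k, _, 0, z, _, hz => ⟨z 1, by
      rw [mem_Bd_zero, sub_eq_zero]; exact exact_dd hz 1⟩
  | 0, _, j + 1, z, _, hz => ⟨0, by
      rw [map_zero, sub_zero]
      exact ⟨z 1, Inv_zero _, (exact_dd hz 1).symm⟩⟩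
  | k + 1, hk, j + 1, z, hI, hz => by
      obtain ⟨c1, v, hv, hdv⟩ := gen k (by omega) (j + 1) z (Inv_mono hI) hz
      let κ : Fin 6 := ⟨k, by omega⟩
      have hr : dd (j + 1) (st κ _ v - v) = 0 := by
        rw [map_sub, st, ← pl_dd, hdv, map_sub, form_pl, hI]
        · abel
        · intro i hi
          have : i ≠ κ := fun h => by rw [h] at hi; simp [κ] at hi
          simp [ev, this]
      obtain ⟨c2, hb⟩ := gen k (by omega) j (st κ _ v - v) (sub_mem (Inv_pl hv _) hv) hr
      obtain ⟨b', hb', hbb⟩ := Bd_surj (k := κ) hb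
      refine ⟨c1 + Kt.single κ c2, v - mulxi κ (form j c2) - b', ?_, ?_⟩
      · apply Inv_succ (k := κ)
        · refine sub_mem (sub_mem hv ?_) (Bd_Inv hb')
          intro a ha
          rw [pl_mulxi, ha κ le_rfl, zero_smul, zero_add, form_pl]
        · have h1 : st κ (j + 1) (mulxi κ (form j c2)) = form j c2 + mulxi κ (form j c2) := by
            rw [st, pl_mulxi, form_pl]; simp [ev]
          rw [map_sub, map_sub, h1]
          have h2 : st κ (j + 1) b' = b' + (st κ (j + 1) v - v - form j c2) := by
            rw [← hbb]; abel
          rw [h2]; abel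
      · rw [map_sub, map_sub, hdv, Bd_cocycle hb', map_add, form_single]; abel

theorem tor (N : ℤ) (hN : N ≠ 0) : ∀ (k : ℕ) (_ : k ≤ 6) (j : ℕ) (z : Co (j + 1)),
    z ∈ Inv k (j + 1) → N • z ∈ Bd k j → z ∈ Bd k j
  | k, _, 0, z, _, hz => mem_Bd_zero.2 (Co.torsion_free hN (mem_Bd_zero.1 hz))
  | 0, _, j + 1, z, _, hz => by
      have h := Bd_cocycle hz
      rw [map_zsmul] at h
      exact ⟨z 1, Inv_zero _, (exact_dd (Co.torsion_free hN h) 1).symm⟩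
  | k + 1, hk, j + 1, z, hI, hz => by
      obtain ⟨q, hq, hdq⟩ := hz
      obtain ⟨v, hv, hdv⟩ := tor N hN k (by omega) (j + 1) z (Inv_mono hI)
        ⟨q, Inv_mono hq, hdq⟩
      let κ : Fin 6 := ⟨k, by omega⟩
      have hev : ∀ i : Fin 6, k + 1 ≤ i.val → ev κ i = 0 := by
        intro i hi
        have : i ≠ κ := fun h => by rw [h] at hi; simp [κ] at hi
        simp [ev, this]
      have h0 : dd (j + 1) (N • v - q) = 0 := by
        rw [map_sub, map_zsmul, hdv, hdq, sub_self]
      obtain ⟨c, hc⟩ := gen k (by omega) j (N • v - q)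
        (sub_mem (zsmul_mem hv _) (Inv_mono hq)) h0
      have hr : N • (st κ _ v - v) ∈ Bd k j := by
        have := sub_mem (Bd_st κ hc) hc
        convert this using 1
        have hq' : st κ (j + 1) q = q := hq _ hev
        have hc' : st κ (j + 1) (form j c) = form j c := form_pl _ _
        rw [map_sub, map_sub, hq', hc', map_zsmul, smul_sub]; abel
      have hr2 : st κ _ v - v ∈ Bd k j := tor N hN k (by omega) j _ (sub_mem (Inv_pl hv _) hv) hr
      obtain ⟨b', hb', hbb⟩ := Bd_surj (k := κ) hr2
      refine ⟨v - b', ?_, ?_⟩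
      · apply Inv_succ (k := κ)
        · exact sub_mem hv (Bd_Inv hb')
        · have h2 : st κ (j + 1) b' = b' + (st κ (j + 1) v - v) := by
            rw [← hbb]; abel
          rw [map_sub, h2]; abel
      · rw [map_sub, hdv, Bd_cocycle hb', sub_zero]

end Crystal

open Matrix

namespace Crystal

lemma mem_Inv6 {n : ℕ} {f : Co n} : f ∈ Inv 6 n ↔ ∀ a, pl (tr a) n f = f :=
  ⟨fun h a => h a fun i hi => by omega, fun h a _ => h a⟩

/-- powers of the generator acting on cochains -/
def tp (m n : ℕ) : Co n →+ Co n := pl (tg ^ m) n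

lemma tp_tp (a b : ℕ) {n : ℕ} (f : Co n) : tp a n (tp b n f) = tp (b + a) n f := by
  unfold tp; rw [pl_pl, pow_add]
lemma tp_zero {n : ℕ} (f : Co n) : tp 0 n f = f := by
  unfold tp; rw [pow_zero, pl_one]
lemma tp_12 {n : ℕ} (f : Co n) : tp 12 n f = f := by
  unfold tp; rw [tg_pow, pl_one]
lemma tp_dd (m : ℕ) {n : ℕ} (f : Co n) : tp m (n + 1) (dd n f) = dd n (tp m n f) := pl_dd _ _
lemma tp_one_apply {n : ℕ} (f : Co (n + 1)) (y : Gam) :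
    tp 1 (n + 1) f y = tp 1 n (f (tg * y)) := by
  unfold tp; rw [pow_one, pl_apply]
lemma tp_apply (m : ℕ) {n : ℕ} (f : Co (n + 1)) (y : Gam) :
    tp m (n + 1) f y = tp m n (f (tg ^ m * y)) := pl_apply _ _ _

lemma Inv6_tp (m : ℕ) {n : ℕ} {f : Co n} (h : f ∈ Inv 6 n) : tp m n f ∈ Inv 6 n := by
  induction m with
  | zero => rw [tp_zero]; exact h
  | succ m ih =>
    rw [← tp_tp, mem_Inv6]
    intro a
    unfold tp at *
    rw [pl_pl, pow_one, tg_tr, ← pl_pl, mem_Inv6.1 ih]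

/-- the norm -/
def NN (n : ℕ) : Co n →+ Co n := ∑ m ∈ Finset.range 12, tp m n

lemma NN_apply {n : ℕ} (f : Co n) : NN n f = ∑ m ∈ Finset.range 12, tp m n f := by
  unfold NN; rw [AddMonoidHom.finsetSum_apply]

lemma NN_dd {n : ℕ} (f : Co n) : NN (n + 1) (dd n f) = dd n (NN n f) := by
  rw [NN_apply, NN_apply, map_sum]
  exact Finset.sum_congr rfl fun m _ => tp_dd m f

lemma NN_tp {n : ℕ} (f : Co n) : NN n (tp 1 n f) = NN n f := by
  rw [NN_apply, NN_apply]
  have : ∀ m, tp m n (tp 1 n f) = tp (m + 1) n f := fun m => by rw [tp_tp, add_comm]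
  simp only [this]
  have h := Finset.sum_range_succ' (fun m => tp m n f) 12
  rw [Finset.sum_range_succ, tp_12, tp_zero] at h
  exact (add_right_cancel h).symm

lemma tp_NN {n : ℕ} (f : Co n) : tp 1 n (NN n f) = NN n f := by
  conv_rhs => rw [← NN_tp]
  rw [NN_apply, NN_apply, map_sum]
  exact Finset.sum_congr rfl fun m _ => by rw [tp_tp, tp_tp, add_comm]

lemma Inv6_NN {n : ℕ} {f : Co n} (h : f ∈ Inv 6 n) : NN n f ∈ Inv 6 n := by
  rw [NN_apply]
  exact sum_mem fun m _ => Inv6_tp m h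

/-- `Γ`-invariant cochains -/
def IG (n : ℕ) : AddSubgroup (Co n) where
  carrier := {f | f ∈ Inv 6 n ∧ tp 1 n f = f}
  zero_mem' := ⟨zero_mem _, map_zero _⟩
  add_mem' := fun {f g} hf hg => ⟨add_mem hf.1 hg.1, by rw [map_add, hf.2, hg.2]⟩
  neg_mem' := fun {f} hf => ⟨neg_mem hf.1, by rw [map_neg, hf.2]⟩

lemma mem_IG {n : ℕ} {f : Co n} : f ∈ IG n ↔ f ∈ Inv 6 n ∧ tp 1 n f = f := Iff.rfl

lemma IG_NN {n : ℕ} {f : Co n} (h : f ∈ Inv 6 n) : NN n f ∈ IG n := ⟨Inv6_NN h, tp_NN f⟩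

lemma IG_tp {n : ℕ} {f : Co n} (h : f ∈ IG n) (m : ℕ) : tp m n f = f := by
  induction m with
  | zero => exact tp_zero f
  | succ m ih => rw [← tp_tp, ih, h.2]

lemma IG_pl {n : ℕ} {f : Co n} (h : f ∈ IG n) (g : Gam) : pl g n f = f := by
  obtain ⟨a, m, rfl⟩ := gam_gen g
  rw [← pl_pl, mem_Inv6.1 h.1]
  exact IG_tp h m

lemma mem_IG_of_pl {n : ℕ} {f : Co n} (h : ∀ g, pl g n f = f) : f ∈ IG n :=
  ⟨mem_Inv6.2 fun _ => h _, h _⟩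

lemma IG_dd {n : ℕ} {f : Co n} (h : f ∈ IG n) : dd n f ∈ IG (n + 1) :=
  ⟨Inv_dd h.1, by rw [tp_dd, h.2]⟩

/-- `Γ`-coboundaries -/
def BG : ∀ j, AddSubgroup (Co (j + 1))
  | 0 => ⊥
  | j + 1 => (IG (j + 1)).map (dd (j + 1))

lemma BG_Bd : ∀ {j : ℕ} {f : Co (j + 1)}, f ∈ BG j → f ∈ Bd 6 j
  | 0, _, h => h
  | _ + 1, _, ⟨w, hw, e⟩ => ⟨w, hw.1, e⟩

lemma pg_tg_pow (m : ℕ) (x : Gam) : pg (tg ^ m * x) = m + pg x := by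
  induction m with
  | zero => simp
  | succ m ih => rw [pow_succ', mul_assoc, pg_tg, ih]; push_cast; ring

lemma NN_surj {n : ℕ} {y : Co (n + 1)} (h : y ∈ IG (n + 1)) :
    ∃ v ∈ Inv 6 (n + 1), NN (n + 1) v = y := by
  refine ⟨diag fun x => if pg x = 0 then y else 0, ?_, ?_⟩
  · rw [mem_Inv6]
    intro a
    apply Co.ext; intro x
    rw [pl_apply, diag_apply, diag_apply, pg_tr]
    split_ifs
    · rw [← pl_apply, mem_Inv6.1 h.1]
    · exact map_zero _
  · apply Co.ext; intro x
    rw [NN_apply, Co.sum_apply]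
    have : ∀ m : ℕ, tp m (n + 1) (diag fun x => if pg x = 0 then y else 0) x
        = if (m : ZMod 12) + pg x = 0 then y x else 0 := by
      intro m
      rw [tp_apply, diag_apply, pg_tg_pow]
      split_ifs
      · rw [← tp_apply, IG_tp h]
      · exact map_zero _
    simp only [this]
    generalize pg x = p
    rw [← Finset.sum_filter]
    have hc : ∀ p : ZMod 12, ((Finset.range 12).filter
      fun m : ℕ => (m : ZMod 12) + p = 0).card = 1 := by decide
    rw [Finset.sum_const, hc, one_smul]

lemma NN_exact {n : ℕ} {f : Co (n + 1)} (h : f ∈ Inv 6 (n + 1)) (h0 : NN (n + 1) f = 0) :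
    ∃ g ∈ Inv 6 (n + 1), tp 1 (n + 1) g - g = f := by
  let S : ℕ → Co (n + 1) := fun m => - ∑ i ∈ Finset.range (12 - m), tp i (n + 1) f
  have hS : ∀ m, m < 12 → tp 1 (n + 1) (S (m + 1)) = S m + f := by
    intro m hm
    have e : 12 - m = (12 - (m + 1)) + 1 := by omega
    show tp 1 (n + 1) (- ∑ i ∈ Finset.range (12 - (m + 1)), tp i (n + 1) f)
      = - ∑ i ∈ Finset.range (12 - m), tp i (n + 1) f + f
    rw [e, Finset.sum_range_succ', tp_zero, map_neg, map_sum]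
    simp only [tp_tp]
    abel
  have h12 : S 12 = 0 := by simp [S]
  have hS0 : S 0 = 0 := by
    show - ∑ i ∈ Finset.range 12, tp i (n + 1) f = 0
    rw [← NN_apply, h0, neg_zero]
  have hI : ∀ m, S m ∈ Inv 6 (n + 1) := fun m => neg_mem (sum_mem fun i _ => Inv6_tp i h)
  have hp : ∀ p : ZMod 12, S ((1 + p).val) = S (p.val + 1) := by
    intro p
    by_cases hp : p.val + 1 = 12
    · have : (1 + p).val = 0 := by revert hp; revert p; decide
      rw [this, hp, h12, hS0]
    · have : (1 + p).val = p.val + 1 := by revert hp; revert p; decide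
      rw [this]
  refine ⟨diag fun x => S (pg x).val, ?_, ?_⟩
  · rw [mem_Inv6]
    intro a
    apply Co.ext; intro x
    rw [pl_apply, diag_apply, diag_apply, pg_tr, ← pl_apply, mem_Inv6.1 (hI _)]
  · apply Co.ext; intro x
    rw [Co.sub_apply, tp_one_apply, diag_apply, diag_apply, pg_tg, ← tp_one_apply, hp,
      hS _ (ZMod.val_lt _), Co.add_apply]
    abel

/-- the zig-zag relation (cup product with the generator of degree two) -/
def rel (j : ℕ) (x : Co (j + 3)) (y : Co (j + 1)) : Prop :=
  ∃ u ∈ Inv 6 (j + 2), ∃ v ∈ Inv 6 (j + 1), dd (j + 2) u = x ∧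
    tp 1 (j + 2) u - u = dd (j + 1) v ∧ NN (j + 1) v = y

lemma rel_add {j : ℕ} {x x' : Co (j + 3)} {y y' : Co (j + 1)} (h : rel j x y) (h' : rel j x' y') :
    rel j (x + x') (y + y') := by
  obtain ⟨u, hu, v, hv, h1, h2, h3⟩ := h
  obtain ⟨u', hu', v', hv', h1', h2', h3'⟩ := h'
  refine ⟨u + u', add_mem hu hu', v + v', add_mem hv hv', ?_, ?_, ?_⟩
  · rw [map_add, h1, h1']
  · rw [map_add, map_add, ← h2, ← h2']; abel
  · rw [map_add, h3, h3']

lemma rel_smul {j : ℕ} {x : Co (j + 3)} {y : Co (j + 1)} (h : rel j x y) (m : ℤ) :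
    rel j (m • x) (m • y) := by
  obtain ⟨u, hu, v, hv, h1, h2, h3⟩ := h
  refine ⟨m • u, zsmul_mem hu m, m • v, zsmul_mem hv m, ?_, ?_, ?_⟩
  · rw [map_zsmul, h1]
  · rw [map_zsmul, map_zsmul, ← h2, smul_sub]
  · rw [map_zsmul, h3]

lemma rel_zero : ∀ {j : ℕ} {x : Co (j + 3)} {y : Co (j + 1)}, rel j x y → y ∈ BG j →
    x ∈ BG (j + 2) := by
  intro j x y h hy
  obtain ⟨u, hu, v, hv, h1, h2, h3⟩ := h
  have key : ∃ v' ∈ Inv 6 (j + 1), dd (j + 1) v' = dd (j + 1) v ∧ NN (j + 1) v' = 0 := by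
    cases j with
    | zero => exact ⟨v, hv, rfl, h3.trans hy⟩
    | succ j =>
      obtain ⟨q, hq, rfl⟩ := hy
      obtain ⟨q', hq', rfl⟩ := NN_surj hq
      refine ⟨v - dd _ q', sub_mem hv (Inv_dd hq'), ?_, ?_⟩
      · rw [map_sub, dd_dd, sub_zero]
      · rw [map_sub, h3, NN_dd, sub_self]
  obtain ⟨v', hv', e1, e2⟩ := key
  obtain ⟨g, hg, rfl⟩ := NN_exact hv' e2
  refine ⟨u - dd _ g, ⟨sub_mem hu (Inv_dd hg), ?_⟩, ?_⟩
  · rw [← e1, map_sub, ← tp_dd] at h2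
    rw [map_sub, sub_eq_iff_eq_add.1 h2]; abel
  · rw [map_sub, h1, dd_dd, sub_zero]

lemma rel_exists {j : ℕ} {y : Co (j + 1)} (hy : y ∈ IG (j + 1)) (hd : dd (j + 1) y = 0) :
    ∃ x ∈ IG (j + 3), dd (j + 3) x = 0 ∧ rel j x y := by
  obtain ⟨v, hv, rfl⟩ := NN_surj hy
  rw [← NN_dd] at hd
  obtain ⟨u, hu, e⟩ := NN_exact (Inv_dd hv) hd
  refine ⟨dd _ u, ⟨Inv_dd hu, ?_⟩, dd_dd _, u, hu, v, hv, rfl, e, rfl⟩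
  rw [tp_dd, ← sub_eq_zero, ← map_sub, e, dd_dd]

end Crystal

open Matrix

namespace Crystal

/-- all coordinates -/
def X6 (y : Gam) : Fin 6 → ℤ := fun i => xi i y

lemma X6_tr (a : Fin 6 → ℤ) (y : Gam) : X6 (tr a * y) = a + X6 y := funext fun i => xi_tr a i y

lemma X6_tg (y : Gam) : X6 (tg * y) = holM *ᵥ X6 y := funext fun i => xi_tg i y

lemma X6_tg_pow (m : ℕ) (y : Gam) : X6 (tg ^ m * y) = (holM ^ m) *ᵥ X6 y := by
  induction m with
  | zero => simp
  | succ m ih => rw [pow_succ', mul_assoc, X6_tg, ih, pow_succ', Matrix.mulVec_mulVec]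

/-- translation invariant cochains from functions of differences -/
def c1 (F : (Fin 6 → ℤ) → ℤ) : Co 2 := fun y0 y1 => F (X6 y1 - X6 y0)
def c2 (F : (Fin 6 → ℤ) → (Fin 6 → ℤ) → ℤ) : Co 3 :=
  fun y0 y1 y2 => F (X6 y1 - X6 y0) (X6 y2 - X6 y1)
def c3 (F : (Fin 6 → ℤ) → (Fin 6 → ℤ) → (Fin 6 → ℤ) → ℤ) : Co 4 :=
  fun y0 y1 y2 y3 => F (X6 y1 - X6 y0) (X6 y2 - X6 y1) (X6 y3 - X6 y2)

lemma c1_Inv (F) : c1 F ∈ Inv 6 2 := by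
  rw [mem_Inv6]; intro a
  funext y0 y1
  show F (X6 (tr a * y1) - X6 (tr a * y0)) = F (X6 y1 - X6 y0)
  rw [X6_tr, X6_tr, add_sub_add_left_eq_sub]

lemma c2_Inv (F) : c2 F ∈ Inv 6 3 := by
  rw [mem_Inv6]; intro a
  funext y0 y1 y2
  show F (X6 (tr a * y1) - X6 (tr a * y0)) (X6 (tr a * y2) - X6 (tr a * y1))
    = F (X6 y1 - X6 y0) (X6 y2 - X6 y1)
  simp only [X6_tr, add_sub_add_left_eq_sub]

lemma c2_tp (m : ℕ) (F) : tp m 3 (c2 F) = c2 fun a b => F ((holM ^ m) *ᵥ a) ((holM ^ m) *ᵥ b) := by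
  funext y0 y1 y2
  show F (X6 (tg ^ m * y1) - X6 (tg ^ m * y0)) (X6 (tg ^ m * y2) - X6 (tg ^ m * y1)) = F _ _
  simp only [X6_tg_pow, Matrix.mulVec_sub]

lemma c3_tp (m : ℕ) (F) : tp m 4 (c3 F) = c3 fun a b c =>
    F ((holM ^ m) *ᵥ a) ((holM ^ m) *ᵥ b) ((holM ^ m) *ᵥ c) := by
  funext y0 y1 y2 y3
  show F (X6 (tg ^ m * y1) - X6 (tg ^ m * y0)) (X6 (tg ^ m * y2) - X6 (tg ^ m * y1))
    (X6 (tg ^ m * y3) - X6 (tg ^ m * y2)) = F _ _ _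
  simp only [X6_tg_pow, Matrix.mulVec_sub]

lemma c1_dd (F) : dd 2 (c1 F) = c2 fun a b => F b - F (a + b) + F a := by
  funext y0 y1 y2
  show F (X6 y2 - X6 y1) - (F (X6 y2 - X6 y0) - F (X6 y1 - X6 y0)) = F _ - F _ + F _
  have : X6 y1 - X6 y0 + (X6 y2 - X6 y1) = X6 y2 - X6 y0 := by abel
  rw [this]; ring

lemma c2_dd (F) : dd 3 (c2 F) = c3 fun a b c => F b c - F (a + b) c + F a (b + c) - F a b := by
  funext y0 y1 y2 y3
  show F (X6 y2 - X6 y1) (X6 y3 - X6 y2) - (F (X6 y2 - X6 y0) (X6 y3 - X6 y2)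
      - (F (X6 y1 - X6 y0) (X6 y3 - X6 y1) - F (X6 y1 - X6 y0) (X6 y2 - X6 y1)))
    = F _ _ - F _ _ + F _ _ - F _ _
  have h1 : X6 y1 - X6 y0 + (X6 y2 - X6 y1) = X6 y2 - X6 y0 := by abel
  have h2 : X6 y2 - X6 y1 + (X6 y3 - X6 y2) = X6 y3 - X6 y1 := by abel
  rw [h1, h2]; ring

lemma c2_add (F G) : c2 F + c2 G = c2 fun a b => F a b + G a b := rfl
lemma c2_sub (F G) : c2 F - c2 G = c2 fun a b => F a b - G a b := rfl
lemma c2_neg (F) : - c2 F = c2 fun a b => - F a b := rfl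
lemma c3_add (F G) : c3 F + c3 G = c3 fun a b c => F a b c + G a b c := rfl
lemma c3_sub (F G) : c3 F - c3 G = c3 fun a b c => F a b c - G a b c := rfl

/-- bilinear and trilinear forms -/
def bf (c : Fin 6 → Fin 6 → ℤ) (a b : Fin 6 → ℤ) : ℤ := ∑ i, ∑ j, a i * (b j * c i j)
def tf (c : Fin 6 → Fin 6 → Fin 6 → ℤ) (a b d : Fin 6 → ℤ) : ℤ :=
  ∑ i, ∑ j, ∑ k, a i * (b j * (d k * c i j k))

/-- bilinear and trilinear cochains -/
def f1 (c : Fin 6 → ℤ) : Co 2 := c1 fun a => ∑ i, a i * c i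
def f2 (c : Fin 6 → Fin 6 → ℤ) : Co 3 := c2 (bf c)
def f3 (c : Fin 6 → Fin 6 → Fin 6 → ℤ) : Co 4 := c3 (tf c)

lemma form1_eq (c : Kt 1) : form 1 c = f1 c := by
  funext y0 y1
  exact form_apply c y0 y1

lemma form2_eq (c : Kt 2) : form 2 c = f2 c := by
  funext y0 y1 y2
  refine (congrFun (form_apply c y0 y1) y2).trans ?_
  rw [Co.sum_apply]
  let c' : Fin 6 → Fin 6 → ℤ := c
  refine Finset.sum_congr (g := fun i => (show Co 0 from
    ∑ j, (X6 y1 - X6 y0) i * ((X6 y2 - X6 y1) j * c' i j))) rfl fun i _ => ?_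
  rw [Co.zsmul_apply, form1_eq]
  exact Finset.mul_sum Finset.univ (fun j => (X6 y2 - X6 y1) j * c' i j) ((X6 y1 - X6 y0) i)

lemma form3_eq (c : Kt 3) : form 3 c = f3 c := by
  funext y0 y1 y2 y3
  refine (congrFun (congrFun (form_apply c y0 y1) y2) y3).trans ?_
  rw [Co.sum_apply, Co.sum_apply]
  let c' : Fin 6 → Fin 6 → Fin 6 → ℤ := c
  refine Finset.sum_congr (g := fun i => (show Co 0 from
    ∑ j, ∑ k, (X6 y1 - X6 y0) i * ((X6 y2 - X6 y1) j * ((X6 y3 - X6 y2) k * c' i j k))))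
    rfl fun i _ => ?_
  rw [Co.zsmul_apply, Co.zsmul_apply, form2_eq]
  show (X6 y1 - X6 y0) i * (∑ j, ∑ k, (X6 y2 - X6 y1) j * ((X6 y3 - X6 y2) k * c' i j k)) =
    ∑ j, ∑ k, (X6 y1 - X6 y0) i * ((X6 y2 - X6 y1) j * ((X6 y3 - X6 y2) k * c' i j k))
  rw [Finset.mul_sum]
  refine Finset.sum_congr rfl fun j _ => ?_
  exact Finset.mul_sum _ _ _

lemma f1_Inv (c) : f1 c ∈ Inv 6 2 := c1_Inv _
lemma f2_Inv (c) : f2 c ∈ Inv 6 3 := c2_Inv _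
lemma f3_Inv (c) : f3 c ∈ Inv 6 4 := by
  exact (congrArg (· ∈ Inv 6 4) (form3_eq c)).mp (form_Inv 6 (j := 3) c)

lemma gen1 {z : Co 2} (h : z ∈ Inv 6 2) (h0 : dd 2 z = 0) : ∃ c, z - f1 c ∈ Bd 6 1 := by
  obtain ⟨c, hc⟩ := gen 6 le_rfl 1 z h h0
  exact ⟨c, by rw [← form1_eq]; exact hc⟩
lemma gen2 {z : Co 3} (h : z ∈ Inv 6 3) (h0 : dd 3 z = 0) : ∃ c, z - f2 c ∈ Bd 6 2 := by
  obtain ⟨c, hc⟩ := gen 6 le_rfl 2 z h h0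
  exact ⟨c, by rw [← form2_eq]; exact hc⟩
lemma gen3 {z : Co 4} (h : z ∈ Inv 6 4) (h0 : dd 4 z = 0) : ∃ c, z - f3 c ∈ Bd 6 3 := by
  obtain ⟨c, hc⟩ := gen 6 le_rfl 3 z h h0
  exact ⟨c, by rw [← form3_eq]; exact hc⟩

lemma bf_add_left (c) (a a' b) : bf c (a + a') b = bf c a b + bf c a' b := by
  simp only [bf, Pi.add_apply, add_mul, Finset.sum_add_distrib]
lemma bf_add_right (c) (a b b') : bf c a (b + b') = bf c a b + bf c a b' := by
  simp only [bf, Pi.add_apply, add_mul, mul_add, Finset.sum_add_distrib]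
lemma tf_add_1 (c) (a a' b d) : tf c (a + a') b d = tf c a b d + tf c a' b d := by
  simp only [tf, Pi.add_apply, add_mul, Finset.sum_add_distrib]
lemma tf_add_2 (c) (a b b' d) : tf c a (b + b') d = tf c a b d + tf c a b' d := by
  simp only [tf, Pi.add_apply, add_mul, mul_add, Finset.sum_add_distrib]
lemma tf_add_3 (c) (a b d d') : tf c a b (d + d') = tf c a b d + tf c a b d' := by
  simp only [tf, Pi.add_apply, add_mul, mul_add, Finset.sum_add_distrib]

lemma bf_swap (c) (a b) : bf c b a = bf (fun i j => c j i) a b := by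
  unfold bf
  rw [Finset.sum_comm]
  refine Finset.sum_congr rfl fun i _ => Finset.sum_congr rfl fun j _ => by ring

/-- transpositions on 3-tensors -/
def s12 (c : Fin 6 → Fin 6 → Fin 6 → ℤ) : Fin 6 → Fin 6 → Fin 6 → ℤ := fun i j k => c j i k
def s23 (c : Fin 6 → Fin 6 → Fin 6 → ℤ) : Fin 6 → Fin 6 → Fin 6 → ℤ := fun i j k => c i k j

lemma tf_swap12 (c) (a b d) : tf c b a d = tf (s12 c) a b d := by
  unfold tf s12
  rw [Finset.sum_comm]
  refine Finset.sum_congr rfl fun i _ => Finset.sum_congr rfl fun j _ =>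
    Finset.sum_congr rfl fun k _ => by ring
lemma tf_swap23 (c) (a b d) : tf c a d b = tf (s23 c) a b d := by
  unfold tf s23
  refine Finset.sum_congr rfl fun i _ => ?_
  rw [Finset.sum_comm]
  refine Finset.sum_congr rfl fun j _ =>
    Finset.sum_congr rfl fun k _ => by ring

lemma form_sym2 (c : Fin 6 → Fin 6 → ℤ) :
    f2 c + f2 (fun i j => c j i) ∈ Bd 6 2 := by
  refine ⟨- c1 fun a => bf c a a, neg_mem (c1_Inv _), ?_⟩
  rw [map_neg, c1_dd, f2, f2, c2_add, c2_neg]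
  congr 1
  funext a b
  rw [← bf_swap c a b]
  simp only [bf_add_left, bf_add_right]
  ring

lemma form_s12 (c : Fin 6 → Fin 6 → Fin 6 → ℤ) : f3 c + f3 (s12 c) ∈ Bd 6 3 := by
  refine ⟨- c2 fun a b => tf c a a b, neg_mem (c2_Inv _), ?_⟩
  rw [c2_neg, c2_dd, f3, f3, c3_add]
  congr 1
  funext a b d
  rw [← tf_swap12]
  simp only [tf_add_1, tf_add_2, tf_add_3]
  ring

lemma form_s23 (c : Fin 6 → Fin 6 → Fin 6 → ℤ) : f3 c + f3 (s23 c) ∈ Bd 6 3 := by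
  refine ⟨c2 fun a b => tf c a b b, (c2_Inv _), ?_⟩
  rw [c2_dd, f3, f3, c3_add]
  congr 1
  funext a b d
  rw [← tf_swap23]
  simp only [tf_add_1, tf_add_2, tf_add_3]
  ring

lemma form_symm_mem {c : Fin 6 → Fin 6 → ℤ} (h : ∀ i j, c i j = c j i) : f2 c ∈ Bd 6 2 := by
  refine tor 2 (by norm_num) 6 le_rfl 2 _ (f2_Inv _) ?_
  have := form_sym2 c
  have e : (fun i j => c j i) = c := funext₂ fun i j => h j i
  rw [e] at this
  rw [two_smul]
  exact this

/-- alternation -/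
def alt3 (c : Fin 6 → Fin 6 → Fin 6 → ℤ) : Fin 6 → Fin 6 → Fin 6 → ℤ := fun i j k =>
  c i j k - c j i k - c i k j + c j k i + c k i j - c k j i

lemma form_alt3 (c : Fin 6 → Fin 6 → Fin 6 → ℤ) :
    (6 : ℤ) • f3 c - f3 (alt3 c) ∈ Bd 6 3 := by
  have e : f3 (alt3 c) = f3 c - f3 (s12 c) - f3 (s23 c) + f3 (s12 (s23 c))
      + f3 (s23 (s12 c)) - f3 (s12 (s23 (s12 c))) := by
    simp only [f3, c3_add, c3_sub]
    congr 1
    funext a b d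
    simp only [tf]
    simp only [← Finset.sum_add_distrib, ← Finset.sum_sub_distrib]
    refine Finset.sum_congr rfl fun i _ => Finset.sum_congr rfl fun j _ =>
      Finset.sum_congr rfl fun k _ => ?_
    simp only [alt3, s12, s23]
    ring
  have h1 := form_s12 c
  have h2 := form_s23 c
  have h3 := form_s12 (s23 c)
  have h4 := form_s23 (s12 c)
  have h5 := form_s12 (s23 (s12 c))
  rw [e]
  convert add_mem (add_mem (add_mem h1 h2) (sub_mem h2 h3))
    (add_mem (sub_mem h1 h4) (add_mem (sub_mem h1 h4) h5)) using 1
  rw [show (6 : ℤ) = 1 + 1 + 1 + 1 + 1 + 1 by norm_num]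
  simp only [add_smul, one_smul]
  abel

end Crystal

open Matrix

namespace Crystal

/-- a power of the matrix -/
def Q0 : Fin 6 → Fin 6 → ℤ :=
  ![![1, 0, 0, 0, 0, 0], ![0, 1, 0, 0, 0, 0], ![0, 0, 1, 0, 0, 0], ![0, 0, 0, 1, 0, 0], ![0, 0, 0, 0, 1, 0], ![0, 0, 0, 0, 0, 1]]
/-- a power of the matrix -/
def Q1 : Fin 6 → Fin 6 → ℤ :=
  ![![0, 0, 0, 0, 0, -1], ![1, 0, 0, 0, 0, -1], ![0, 1, 0, 0, 0, 0], ![0, 0, 1, 0, 0, 1], ![0, 0, 0, 1, 0, 0], ![0, 0, 0, 0, 1, -1]]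
/-- a power of the matrix -/
def Q4 : Fin 6 → Fin 6 → ℤ :=
  ![![0, 0, -1, 1, -1, 0], ![0, 0, -1, 0, 0, -1], ![0, 0, 0, -1, 0, 0], ![0, 0, 1, -1, 0, 0], ![1, 0, 0, 1, -1, 0], ![0, 1, -1, 1, 0, -1]]
/-- a power of the matrix -/
def Q5 : Fin 6 → Fin 6 → ℤ :=
  ![![0, -1, 1, -1, 0, 1], ![0, -1, 0, 0, -1, 1], ![0, 0, -1, 0, 0, -1], ![0, 1, -1, 0, 0, -1], ![0, 0, 1, -1, 0, 0], ![1, -1, 1, 0, -1, 1]]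
/-- a power of the matrix -/
def Q8 : Fin 6 → Fin 6 → ℤ :=
  ![![-1, 0, 1, -1, 1, 0], ![0, -1, 1, 0, 0, 1], ![0, 0, -1, 1, 0, 0], ![0, 0, -1, 0, 0, 0], ![-1, 0, 0, -1, 0, 0], ![0, -1, 1, -1, 0, 0]]
/-- a power of the matrix -/
def Q9 : Fin 6 → Fin 6 → ℤ :=
  ![![0, 1, -1, 1, 0, 0], ![-1, 1, 0, 0, 1, 0], ![0, -1, 1, 0, 0, 1], ![0, -1, 0, 0, 0, 0], ![0, 0, -1, 0, 0, 0], ![-1, 1, -1, 0, 0, 0]]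
lemma holM_pow0' : holM ^ 0 = Matrix.of Q0 := by decide +kernel
lemma holM_pow0 (i j : Fin 6) : (holM ^ 0) i j = Q0 i j := by rw [holM_pow0']; rfl
lemma holM_pow1' : holM ^ 1 = Matrix.of Q1 := by decide +kernel
lemma holM_pow1 (i j : Fin 6) : (holM ^ 1) i j = Q1 i j := by rw [holM_pow1']; rfl
lemma holM_pow4' : holM ^ 4 = Matrix.of Q4 := by decide +kernel
lemma holM_pow4 (i j : Fin 6) : (holM ^ 4) i j = Q4 i j := by rw [holM_pow4']; rfl
lemma holM_pow5' : holM ^ 5 = Matrix.of Q5 := by decide +kernel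
lemma holM_pow5 (i j : Fin 6) : (holM ^ 5) i j = Q5 i j := by rw [holM_pow5']; rfl
lemma holM_pow8' : holM ^ 8 = Matrix.of Q8 := by decide +kernel
lemma holM_pow8 (i j : Fin 6) : (holM ^ 8) i j = Q8 i j := by rw [holM_pow8']; rfl
lemma holM_powNine : holM ^ 9 = Matrix.of Q9 := by decide +kernel
lemma holM_pow9 (i j : Fin 6) : (holM ^ 9) i j = Q9 i j := by rw [holM_powNine]; rfl

/-- combination of products of matrix entries -/
def P6 (p q r i j k : Fin 6) : ℤ :=
  (Q1 i p * (Q1 j q * Q1 k r) - Q0 i p * (Q0 j q * Q0 k r))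
  + (Q5 i p * (Q5 j q * Q5 k r) - Q4 i p * (Q4 j q * Q4 k r))
  + (Q9 i p * (Q9 j q * Q9 k r) - Q8 i p * (Q8 j q * Q8 k r))

set_option maxRecDepth 100000 in
lemma P6_alt_ord : ∀ i j : Fin 6, i < j → ∀ k, j < k → ∀ p q : Fin 6, p < q → ∀ r, q < r →
    alt3 (P6 p q r) i j k = 0 := by decide +kernel

lemma alt_vanish (F : Fin 6 → Fin 6 → Fin 6 → ℤ) (h1 : ∀ i j k, F j i k = - F i j k)
    (h2 : ∀ i j k, F i k j = - F i j k) (h : ∀ i j k, i < j → j < k → F i j k = 0) :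
    ∀ i j k, F i j k = 0 := by
  have e1 : ∀ i k, F i i k = 0 := fun i k => by have := h1 i i k; omega
  have e2 : ∀ i k, F i k k = 0 := fun i k => by have := h2 i k k; omega
  intro i j k
  have a1 := h1 i j k
  have a2 := h2 i j k
  have a3 := h1 i k j
  have a4 := h2 j i k
  have a5 := h1 j k i
  rcases lt_trichotomy i j with hij | rfl | hij
  · rcases lt_trichotomy j k with hjk | rfl | hjk
    · exact h i j k hij hjk
    · exact e2 _ _
    · rcases lt_trichotomy i k with hik | rfl | hik
      · have := h i k j hik hjk; omega
      · have := e1 i j; omega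
      · have := h k i j hik hij; omega
  · exact e1 _ _
  · rcases lt_trichotomy j k with hjk | rfl | hjk
    · rcases lt_trichotomy i k with hik | rfl | hik
      · have := h j i k hij hik; omega
      · have := e2 j i; omega
      · have := h j k i hjk hik; omega
    · exact e2 _ _
    · have := h k j i hjk hij; omega

lemma P6_alt (p q r i j k : Fin 6) : alt3 (P6 p q r) i j k = 0 := by
  revert p q r
  apply alt_vanish (fun p q r => alt3 (P6 p q r) i j k)
  · intro p q r; simp only [alt3, P6]; ring
  · intro p q r; simp only [alt3, P6]; ring
  · intro p q r hpq hqr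
    revert i j k
    apply alt_vanish (fun i j k => alt3 (P6 p q r) i j k)
    · intro i j k; simp only [alt3]; ring
    · intro i j k; simp only [alt3]; ring
    · intro i j k hij hjk
      exact P6_alt_ord i j hij k hjk p q hpq r hqr

/-- pulled back trilinear form -/
lemma tf_mul (A : Matrix (Fin 6) (Fin 6) ℤ) (B : Fin 6 → Fin 6 → ℤ) (hAB : ∀ i j, A i j = B i j)
    (c) (a b d : Fin 6 → ℤ) :
    tf c (A *ᵥ a) (A *ᵥ b) (A *ᵥ d) =
      ∑ p, ∑ q, ∑ r, a p * (b q * (d r *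
        ∑ i, ∑ j, ∑ k, (B i p * (B j q * B k r)) * c i j k)) := by
  have h1 : tf c (A *ᵥ a) (A *ᵥ b) (A *ᵥ d)
      = ∑ i, ∑ j, ∑ k, ∑ p, ∑ q, ∑ r, a p * (b q * (d r * ((B i p * (B j q * B k r)) * c i j k))) := by
    unfold tf
    refine Finset.sum_congr rfl fun i _ => Finset.sum_congr rfl fun j _ =>
      Finset.sum_congr rfl fun k _ => ?_
    simp only [Matrix.mulVec, dotProduct, hAB]
    rw [Finset.sum_mul]
    refine Finset.sum_congr rfl fun p _ => ?_
    rw [Finset.sum_mul, Finset.mul_sum]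
    refine Finset.sum_congr rfl fun q _ => ?_
    rw [Finset.sum_mul, Finset.mul_sum, Finset.mul_sum]
    refine Finset.sum_congr rfl fun r _ => ?_
    ring
  rw [h1]
  simp only [Finset.mul_sum]
  have sw : ∀ f : Fin 6 → Fin 6 → Fin 6 → Fin 6 → ℤ,
      ∑ k, ∑ p, ∑ q, ∑ r, f k p q r = ∑ p, ∑ q, ∑ r, ∑ k, f k p q r := by
    intro f
    rw [Finset.sum_comm]
    refine Finset.sum_congr rfl fun p _ => ?_
    rw [Finset.sum_comm]
    refine Finset.sum_congr rfl fun q _ => ?_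
    rw [Finset.sum_comm]
  refine (Finset.sum_congr rfl fun i _ => Finset.sum_congr rfl fun j _ => sw _).trans ?_
  refine (Finset.sum_congr rfl fun i _ => sw _).trans ?_
  exact sw _

lemma alt_adj (P c : Fin 6 → Fin 6 → Fin 6 → ℤ) :
    ∑ i, ∑ j, ∑ k, P i j k * alt3 c i j k = ∑ i, ∑ j, ∑ k, alt3 P i j k * c i j k := by
  have w12 : ∀ f : Fin 6 → Fin 6 → Fin 6 → ℤ,
      ∑ i, ∑ j, ∑ k, f i j k = ∑ i, ∑ j, ∑ k, f j i k := fun f => Finset.sum_comm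
  have w23 : ∀ f : Fin 6 → Fin 6 → Fin 6 → ℤ,
      ∑ i, ∑ j, ∑ k, f i j k = ∑ i, ∑ j, ∑ k, f i k j := fun f =>
    Finset.sum_congr rfl fun i _ => Finset.sum_comm
  have e1 := w12 fun i j k => P i j k * c j i k
  have e2 := w23 fun i j k => P i j k * c i k j
  have e3 := (w12 fun i j k => P i j k * c j k i).trans (w23 _)
  have e4 := (w23 fun i j k => P i j k * c k i j).trans (w12 _)
  have e5 := ((w12 fun i j k => P i j k * c k j i).trans (w23 _)).trans (w12 _)
  simp only [alt3, mul_sub, mul_add, sub_mul, add_mul, Finset.sum_add_distrib,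
    Finset.sum_sub_distrib]
  linarith

lemma tf_vanish (c) (a b d : Fin 6 → ℤ) :
    (tf (alt3 c) ((holM ^ 1) *ᵥ a) ((holM ^ 1) *ᵥ b) ((holM ^ 1) *ᵥ d)
      - tf (alt3 c) ((holM ^ 0) *ᵥ a) ((holM ^ 0) *ᵥ b) ((holM ^ 0) *ᵥ d))
    + (tf (alt3 c) ((holM ^ 5) *ᵥ a) ((holM ^ 5) *ᵥ b) ((holM ^ 5) *ᵥ d)
      - tf (alt3 c) ((holM ^ 4) *ᵥ a) ((holM ^ 4) *ᵥ b) ((holM ^ 4) *ᵥ d))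
    + (tf (alt3 c) ((holM ^ 9) *ᵥ a) ((holM ^ 9) *ᵥ b) ((holM ^ 9) *ᵥ d)
      - tf (alt3 c) ((holM ^ 8) *ᵥ a) ((holM ^ 8) *ᵥ b) ((holM ^ 8) *ᵥ d)) = 0 := by
  rw [tf_mul _ _ holM_pow0, tf_mul _ _ holM_pow1, tf_mul _ _ holM_pow4, tf_mul _ _ holM_pow5,
    tf_mul _ _ holM_pow8, tf_mul _ _ holM_pow9]
  simp only [← Finset.sum_add_distrib, ← Finset.sum_sub_distrib]
  refine Finset.sum_eq_zero fun p _ => Finset.sum_eq_zero fun q _ =>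
    Finset.sum_eq_zero fun r _ => ?_
  simp only [← mul_sub, ← mul_add, ← Finset.sum_add_distrib, ← Finset.sum_sub_distrib, ← sub_mul,
    ← add_mul]
  have h := alt_adj (P6 p q r) c
  simp only [P6_alt, zero_mul, Finset.sum_const_zero] at h
  simp only [P6] at h
  rw [h]; ring

lemma N3_f3 (c) : (tp 1 4 (f3 (alt3 c)) - f3 (alt3 c))
    + (tp 5 4 (f3 (alt3 c)) - tp 4 4 (f3 (alt3 c)))
    + (tp 9 4 (f3 (alt3 c)) - tp 8 4 (f3 (alt3 c))) = 0 := by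
  have h : (tp 1 4 (f3 (alt3 c)) - tp 0 4 (f3 (alt3 c)))
    + (tp 5 4 (f3 (alt3 c)) - tp 4 4 (f3 (alt3 c)))
    + (tp 9 4 (f3 (alt3 c)) - tp 8 4 (f3 (alt3 c))) = c3 fun _ _ _ => 0 := by
    simp only [f3, c3_tp, c3_add, c3_sub]
    congr 1
    funext a b d
    exact tf_vanish c a b d
  rw [tp_zero] at h
  exact h

lemma Bd6_tp (m : ℕ) : ∀ {j : ℕ} {f : Co (j + 1)}, f ∈ Bd 6 j → tp m (j + 1) f ∈ Bd 6 j
  | 0, f, h => by rw [mem_Bd_zero.1 h, map_zero]; exact zero_mem _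
  | j + 1, f, h => by
      obtain ⟨w, hw, rfl⟩ := h
      exact ⟨tp m _ w, Inv6_tp m hw, (tp_dd _ _).symm⟩

/-- `(t-1)(1+t^4+t^8)` kills degree three classes -/
lemma F2 {r : Co 4} (h : r ∈ Inv 6 4) (h0 : dd 4 r = 0) :
    (tp 1 4 r - r) + (tp 5 4 r - tp 4 4 r) + (tp 9 4 r - tp 8 4 r) ∈ Bd 6 3 := by
  obtain ⟨c, hc⟩ := gen3 h h0
  refine tor 6 (by norm_num) 6 le_rfl 3 _ ?_ ?_
  · exact add_mem (add_mem (sub_mem (Inv6_tp _ h) h) (sub_mem (Inv6_tp _ h) (Inv6_tp _ h)))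
      (sub_mem (Inv6_tp _ h) (Inv6_tp _ h))
  have hs : (6 : ℤ) • r - f3 (alt3 c) ∈ Bd 6 3 := by
    convert add_mem (zsmul_mem hc 6) (form_alt3 c) using 1
    rw [smul_sub]; abel
  have h9 := sub_mem (Bd6_tp 9 hs) (Bd6_tp 8 hs)
  have h5 := sub_mem (Bd6_tp 5 hs) (Bd6_tp 4 hs)
  have h1 := sub_mem (Bd6_tp 1 hs) hs
  convert add_mem (add_mem h1 h5) h9 using 1
  have := N3_f3 c
  simp only [map_sub, map_zsmul, smul_add, smul_sub]
  rw [← sub_eq_zero]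
  convert this using 1
  abel

end Crystal

open Matrix

namespace Crystal

/-- binomial coefficient -/
def ch2 (x : ℤ) : ℤ := x * (x - 1) / 2

lemma two_ch2 (x : ℤ) : 2 * ch2 x = x * (x - 1) := by
  unfold ch2
  rcases Int.even_or_odd' x with ⟨k, rfl | rfl⟩
  · have : 2 * k * (2 * k - 1) = 2 * (k * (2 * k - 1)) := by ring
    rw [this, Int.mul_ediv_cancel_left _ (by norm_num)]
  · have : (2 * k + 1) * (2 * k + 1 - 1) = 2 * (k * (2 * k + 1)) := by ring
    rw [this, Int.mul_ediv_cancel_left _ (by norm_num)]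

lemma ch2_add (x y : ℤ) : ch2 (x + y) = ch2 x + ch2 y + x * y := by
  have h1 := two_ch2 (x + y)
  have h2 := two_ch2 x
  have h3 := two_ch2 y
  have : 2 * ch2 (x + y) = 2 * (ch2 x + ch2 y + x * y) := by
    rw [h1, mul_add, mul_add, h2, h3]; ring
  linarith

/-- orbit of the first basis vector -/
def orb : Fin 12 → Fin 6 → ℤ :=
  ![![1, 0, 0, 0, 0, 0],
    ![0, 1, 0, 0, 0, 0],
    ![0, 0, 1, 0, 0, 0],
    ![0, 0, 0, 1, 0, 0],
    ![0, 0, 0, 0, 1, 0],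
    ![0, 0, 0, 0, 0, 1],
    ![-1, -1, 0, 1, 0, -1],
    ![1, 0, -1, -1, 1, 1],
    ![-1, 0, 0, 0, -1, 0],
    ![0, -1, 0, 0, 0, -1],
    ![1, 1, -1, -1, 0, 1],
    ![-1, 0, 1, 0, -1, -1]]

/-- explicit 3-cocycle -/
def Uf (a b d : Fin 6 → ℤ) : ℤ :=
  0 + a 0 * b 1 * d 2 - a 0 * b 1 * d 3 + a 0 * b 2 * d 5 + a 1 * b 2 * d 3 - a 1 * b 2 * d 4 + a 2 * b 3 * d 4 - a 2 * b 3 * d 5 + a 3 * b 4 * d 5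

/-- explicit 2-cochains -/
def V1 (a b : Fin 6 → ℤ) : ℤ :=
  (0 + ch2 (a 5) * b 5 + ch2 (a 5) * b 2 - ch2 (a 5) * b 1 + (a 3 * a 5) * b 5 - (a 3 * a 5) * b 4 + (a 1 * a 5) * b 4 - (a 1 * a 5) * b 3 + (a 1 * a 5) * b 2 - (a 0 * a 5) * b 5 - (a 0 * a 5) * b 2 + (a 0 * a 5) * b 1 + a 3 * ch2 (b 5) - a 3 * (b 4 * b 5) + a 1 * ch2 (b 5) + a 1 * (b 2 * b 5) - a 0 * ch2 (b 5) - a 0 * (b 2 * b 5) + a 0 * (b 1 * b 5))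
  + (- (a 0 * b 1) + a 1 * b 3)
def V2 (a b : Fin 6 → ℤ) : ℤ := 2 * (a 0 * b 2) + a 1 * b 3
def V3 (a b : Fin 6 → ℤ) : ℤ := 2 * (a 2 * b 3)

/-- invariant alternating forms -/
def T1 : Fin 6 → Fin 6 → ℤ :=
  ![![0, 0, 0, 1, -1, 1],
    ![0, 0, 0, 0, 1, -1],
    ![0, 0, 0, 0, 0, 1],
    ![-1, 0, 0, 0, 0, 0],
    ![1, -1, 0, 0, 0, 0],
    ![-1, 1, -1, 0, 0, 0]]
def T2 : Fin 6 → Fin 6 → ℤ :=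
  ![![0, 0, 1, 0, 1, 0],
    ![0, 0, 0, 1, 0, 1],
    ![-1, 0, 0, 0, 1, 0],
    ![0, -1, 0, 0, 0, 1],
    ![-1, 0, -1, 0, 0, 0],
    ![0, -1, 0, -1, 0, 0]]
def T3 : Fin 6 → Fin 6 → ℤ :=
  ![![0, 1, 0, 0, 2, -1],
    ![-1, 0, 1, 0, 0, 2],
    ![0, -1, 0, 1, 0, 0],
    ![0, 0, -1, 0, 1, 0],
    ![-2, 0, 0, -1, 0, 1],
    ![1, -2, 0, 0, -1, 0]]

lemma holM_mulVec (a : Fin 6 → ℤ) :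
    holM *ᵥ a = ![-a 5, a 0 - a 5, a 1, a 2 + a 5, a 3, a 4 - a 5] := by
  funext i
  fin_cases i <;> simp [holM, Matrix.mulVec, dotProduct, Fin.sum_univ_six] <;> ring

lemma orb_step (n : Fin 12) : holM *ᵥ orb n = orb (n + 1) := by
  rw [holM_mulVec]
  revert n
  decide +kernel

/-- the orbit indexed by natural numbers -/
def orbN (n : ℕ) : Fin 6 → ℤ := orb (Fin.ofNat 12 n)

lemma orbN_step (n : ℕ) : holM *ᵥ orbN n = orbN (n + 1) := by
  unfold orbN
  rw [orb_step]
  congr 1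
  apply Fin.ext
  simp [Fin.val_add]

lemma orb_pow (m n : ℕ) : (holM ^ m) *ᵥ orbN n = orbN (n + m) := by
  induction m with
  | zero => simp
  | succ m ih =>
    rw [pow_succ', ← Matrix.mulVec_mulVec, ih, orbN_step]
    rfl

lemma ev_orb (i : Fin 6) : ev i = orbN i.val := by
  revert i
  unfold ev orbN
  decide +kernel

/-- the alternation of a 2-cochain -/
def alt (i j : Fin 6) (f : Co 3) : ℤ :=
  (show ℤ from f 1 (tr (ev i)) (tr (ev i) * tr (ev j)))
    - (show ℤ from f 1 (tr (ev j)) (tr (ev i) * tr (ev j)))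

lemma alt_add (i j) (f g : Co 3) : alt i j (f + g) = alt i j f + alt i j g := by
  exact add_sub_add_comm (α := ℤ) _ _ _ _
lemma alt_sub (i j) (f g : Co 3) : alt i j (f - g) = alt i j f - alt i j g := by
  exact sub_sub_sub_comm (α := ℤ) _ _ _ _
lemma alt_smul (i j) (m : ℤ) (f : Co 3) : alt i j (m • f) = m * alt i j f := by
  let φ : Co 3 →+ ℤ := ⟨⟨alt i j, rfl⟩, alt_add i j⟩
  have := map_zsmul φ m f
  rw [smul_eq_mul] at this
  exact this

lemma X6_one : X6 1 = 0 := rfl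
lemma X6_tr' (a : Fin 6 → ℤ) : X6 (tr a) = a := rfl

lemma alt_c2 (i j) (F) : alt i j (c2 F) = F (ev i) (ev j) - F (ev j) (ev i) := by
  show F (X6 (tr (ev i)) - X6 1) (X6 (tr (ev i) * tr (ev j)) - X6 (tr (ev i)))
    - F (X6 (tr (ev j)) - X6 1) (X6 (tr (ev i) * tr (ev j)) - X6 (tr (ev j))) = _
  simp only [X6_tr, X6_tr', X6_one, sub_zero, add_sub_cancel_left, add_sub_cancel_right]

lemma alt_Bd (i j) {f : Co 3} (h : f ∈ Bd 6 2) : alt i j f = 0 := by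
  obtain ⟨w, hw, rfl⟩ := h
  have e : ∀ a : Fin 6 → ℤ, ∀ y : Gam, w (tr a) (tr a * y) = w 1 y := by
    intro a y
    have := congrFun (congrFun (mem_Inv6.1 hw a) 1) y
    rw [pl_apply] at this
    rw [← this, mul_one]
    rfl
  have e1 : w (tr (ev i)) (tr (ev i) * tr (ev j)) = w 1 (tr (ev j)) := e _ _
  have e2 : w (tr (ev j)) (tr (ev i) * tr (ev j)) = w 1 (tr (ev i)) := by
    rw [← tr_add, add_comm, tr_add]; exact e _ _
  have key : ∀ x y z w' : ℤ, x = z → y = w' →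
    (x - (w' - z)) - (y - (w' - z)) = x - y := by intros; ring
  show ((show ℤ from w (tr (ev i)) (tr (ev i) * tr (ev j)))
      - ((show ℤ from w 1 (tr (ev i) * tr (ev j))) - (show ℤ from w 1 (tr (ev i)))))
    - ((show ℤ from w (tr (ev j)) (tr (ev i) * tr (ev j)))
      - ((show ℤ from w 1 (tr (ev i) * tr (ev j))) - (show ℤ from w 1 (tr (ev j))))) = 0
  rw [e1, e2]
  ring

lemma alt_NN (i j) (F) : alt i j (NN 3 (c2 F)) = ∑ m ∈ Finset.range 12,
    (F (orbN (i.val + m)) (orbN (j.val + m)) - F (orbN (j.val + m)) (orbN (i.val + m))) := by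
  let φ : Co 3 →+ ℤ := ⟨⟨alt i j, rfl⟩, alt_add i j⟩
  have h := map_sum φ (fun m => tp m 3 (c2 F)) (Finset.range 12)
  rw [← NN_apply] at h
  refine h.trans (Finset.sum_congr rfl fun m _ => ?_)
  show alt i j (tp m 3 (c2 F)) = _
  rw [c2_tp, alt_c2, ev_orb, ev_orb, orb_pow, orb_pow]

set_option maxRecDepth 100000 in
lemma alt_V1 (i j) : alt i j (NN 3 (c2 V1)) = 6 * T1 i j := by
  rw [alt_NN]; revert i j; decide +kernel
set_option maxRecDepth 100000 in
lemma alt_V2 (i j) : alt i j (NN 3 (c2 V2)) = 6 * T2 i j := by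
  rw [alt_NN]; revert i j; decide +kernel
set_option maxRecDepth 100000 in
lemma alt_V3 (i j) : alt i j (NN 3 (c2 V3)) = 6 * T3 i j := by
  rw [alt_NN]; revert i j; decide +kernel

lemma c3_dd_zero {F} (h : ∀ a b c d : Fin 6 → ℤ,
    F b c d - F (a + b) c d + F a (b + c) d - F a b (c + d) + F a b c = 0) :
    dd 4 (c3 F) = 0 := by
  funext y0 y1 y2 y3 y4
  show F (X6 y2 - X6 y1) (X6 y3 - X6 y2) (X6 y4 - X6 y3)
    - (F (X6 y2 - X6 y0) (X6 y3 - X6 y2) (X6 y4 - X6 y3)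
      - (F (X6 y1 - X6 y0) (X6 y3 - X6 y1) (X6 y4 - X6 y3)
        - (F (X6 y1 - X6 y0) (X6 y2 - X6 y1) (X6 y4 - X6 y2)
          - F (X6 y1 - X6 y0) (X6 y2 - X6 y1) (X6 y3 - X6 y2)))) = 0
  have := h (X6 y1 - X6 y0) (X6 y2 - X6 y1) (X6 y3 - X6 y2) (X6 y4 - X6 y3)
  have h1 : X6 y1 - X6 y0 + (X6 y2 - X6 y1) = X6 y2 - X6 y0 := by abel
  have h2 : X6 y2 - X6 y1 + (X6 y3 - X6 y2) = X6 y3 - X6 y1 := by abel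
  have h3 : X6 y3 - X6 y2 + (X6 y4 - X6 y3) = X6 y4 - X6 y2 := by abel
  rw [h1, h2, h3] at this
  linarith

lemma c3_Inv (F) : c3 F ∈ Inv 6 4 := by
  rw [mem_Inv6]; intro a
  funext y0 y1 y2 y3
  show F (X6 (tr a * y1) - X6 (tr a * y0)) (X6 (tr a * y2) - X6 (tr a * y1))
      (X6 (tr a * y3) - X6 (tr a * y2))
    = F (X6 y1 - X6 y0) (X6 y2 - X6 y1) (X6 y3 - X6 y2)
  simp only [X6_tr, add_sub_add_left_eq_sub]

lemma rel_V1 : rel 2 0 (NN 3 (c2 V1)) := by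
  refine ⟨c3 Uf, c3_Inv _, c2 V1, c2_Inv _, ?_, ?_, rfl⟩
  · apply c3_dd_zero
    intro a b c d
    simp only [Uf, Pi.add_apply]; ring
  · rw [c2_dd]
    show tp 1 4 (c3 Uf) - c3 Uf = _
    rw [c3_tp, c3_sub]
    congr 1
    funext a b c
    rw [pow_one, holM_mulVec, holM_mulVec, holM_mulVec]
    simp [Uf, V1, ch2_add]
    ring

lemma rel_closed {F} (h : dd 3 (c2 F) = 0) : rel 2 0 (NN 3 (c2 F)) :=
  ⟨0, zero_mem _, c2 F, c2_Inv _, map_zero _, by rw [h, map_zero, sub_zero], rfl⟩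

lemma rel_V2 : rel 2 0 (NN 3 (c2 V2)) := by
  apply rel_closed
  rw [c2_dd]
  show c3 _ = c3 fun _ _ _ => 0
  congr 1
  funext a b c
  simp only [V2, Pi.add_apply]; ring

lemma rel_V3 : rel 2 0 (NN 3 (c2 V3)) := by
  apply rel_closed
  rw [c2_dd]
  show c3 _ = c3 fun _ _ _ => 0
  congr 1
  funext a b c
  simp only [V3, Pi.add_apply]; ring

end Crystal

open Matrix

namespace Crystal

lemma tp_cocycle (m : ℕ) {n : ℕ} {f : Co n} (h : dd n f = 0) : dd n (tp m n f) = 0 := by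
  rw [← tp_dd, h, map_zero]

lemma chainA {x : Co 5} (hx : x ∈ IG 5) (hd : dd 5 x = 0) (h4 : (4 : ℤ) • x ∈ BG 4) :
    ∃ y ∈ IG 3, dd 3 y = 0 ∧ rel 2 ((3 : ℤ) • x) y := by
  have hxB : x ∈ Bd 6 4 := tor 4 (by norm_num) 6 le_rfl 4 x hx.1 (BG_Bd h4)
  obtain ⟨u, hu, rfl⟩ := hxB
  set r := tp 1 4 u - u with hr
  have hrI : r ∈ Inv 6 4 := sub_mem (Inv6_tp 1 hu) hu
  have hrd : dd 4 r = 0 := by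
    rw [hr, map_sub, ← tp_dd, hx.2, sub_self]
  have hrN : NN 4 r = 0 := by
    rw [hr, map_sub, NN_tp, sub_self]
  have hD := F2 hrI hrd
  set D := (tp 1 4 r - r) + (tp 5 4 r - tp 4 4 r) + (tp 9 4 r - tp 8 4 r) with hDdef
  set N3 := r + tp 4 4 r + tp 8 4 r with hN3
  have hN3I : N3 ∈ Inv 6 4 := add_mem (add_mem hrI (Inv6_tp 4 hrI)) (Inv6_tp 8 hrI)
  have h4N : (4 : ℤ) • N3 = -((3 : ℤ) • D + (2 : ℤ) • tp 1 4 D + tp 2 4 D) := by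
    have : NN 4 r = (4 : ℤ) • N3 + ((3 : ℤ) • D + (2 : ℤ) • tp 1 4 D + tp 2 4 D) := by
      rw [NN_apply, hDdef, hN3]
      simp only [Finset.sum_range_succ, Finset.sum_range_zero, map_add, map_sub, tp_tp,
        Nat.reduceAdd, tp_zero]
      abel
    rw [hrN] at this
    exact eq_neg_of_add_eq_zero_left this.symm
  have hN3B : N3 ∈ Bd 6 3 := by
    refine tor 4 (by norm_num) 6 le_rfl 3 N3 hN3I ?_
    rw [h4N]
    exact neg_mem (add_mem (add_mem (zsmul_mem hD 3) (zsmul_mem (Bd6_tp 1 hD) 2)) (Bd6_tp 2 hD))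
  obtain ⟨v, hv, hvN⟩ := hN3B
  set s : Co 4 := (∑ i ∈ Finset.range 4, tp i 4 r) + ∑ i ∈ Finset.range 8, tp i 4 r with hs
  have hsI : s ∈ Inv 6 4 :=
    add_mem (sum_mem fun i _ => Inv6_tp i hrI) (sum_mem fun i _ => Inv6_tp i hrI)
  have hsd : dd 4 s = 0 := by
    rw [hs, map_add, map_sum, map_sum, Finset.sum_eq_zero fun i _ => tp_cocycle i hrd,
      Finset.sum_eq_zero fun i _ => tp_cocycle i hrd, add_zero]
  have h3 : (3 : ℤ) • r + (tp 1 4 s - s) = dd 3 v := by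
    rw [hvN, hs, hN3]
    simp only [Finset.sum_range_succ, Finset.sum_range_zero, map_add, map_zero, tp_tp,
        Nat.reduceAdd, tp_zero]
    abel
  have hrel : tp 1 4 ((3 : ℤ) • u + s) - ((3 : ℤ) • u + s) = dd 3 v := by
    rw [← h3, hr, map_add, map_zsmul]
    rw [smul_sub]; abel
  refine ⟨NN 3 v, IG_NN hv, ?_, (3 : ℤ) • u + s, add_mem (zsmul_mem hu 3) hsI, v, hv, ?_, hrel, rfl⟩
  · rw [← NN_dd, ← hrel, map_sub, NN_tp, sub_self]
  · rw [map_add, hsd, map_zsmul, add_zero]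

lemma c1_tp (m : ℕ) (F) : tp m 2 (c1 F) = c1 fun a => F ((holM ^ m) *ᵥ a) := by
  funext y0 y1
  show F (X6 (tg ^ m * y1) - X6 (tg ^ m * y0)) = F ((holM ^ m) *ᵥ (X6 y1 - X6 y0))
  rw [X6_tg_pow, X6_tg_pow, Matrix.mulVec_sub]

lemma f1_cocycle (c) : dd 2 (f1 c) = 0 := by
  rw [← form1_eq c]; exact form_cocycle (j := 1) c

lemma f2_cocycle (c) : dd 3 (f2 c) = 0 := by
  rw [← form2_eq c]; exact form_cocycle (j := 2) c

/-- three times the inverse of the transposed matrix minus one -/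
def mu3 (l : Fin 6 → ℤ) : Fin 6 → ℤ :=
  let m := - l 5 - l 0 + (l 0 + l 1 + l 2) - 2 * (l 0 + l 1 + l 2 + l 3 + l 4)
  ![m, m + 3 * l 0, m + 3 * (l 0 + l 1), m + 3 * (l 0 + l 1 + l 2),
    m + 3 * (l 0 + l 1 + l 2 + l 3), m + 3 * (l 0 + l 1 + l 2 + l 3 + l 4)]

lemma f1_mu (l : Fin 6 → ℤ) : tp 1 2 (f1 (mu3 l)) - f1 (mu3 l) = (3 : ℤ) • f1 l := by
  unfold f1
  rw [c1_tp]
  funext y0 y1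
  show (∑ i, ((holM ^ 1) *ᵥ (X6 y1 - X6 y0)) i * mu3 l i) - (∑ i, (X6 y1 - X6 y0) i * mu3 l i)
    = (3 : ℤ) • ∑ i, (X6 y1 - X6 y0) i * l i
  generalize X6 y1 - X6 y0 = a
  rw [pow_one, holM_mulVec]
  simp [Fin.sum_univ_six, mu3]
  ring

/-- the constant cochain -/
def one1 : Co 1 := dd 0 (1 : ℤ)

lemma one1_IG : one1 ∈ IG 1 := by
  refine mem_IG_of_pl fun g => ?_
  funext y; rfl

lemma zsmul_one1 (m : ℤ) (y : Gam) : (m • one1) y = m := by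
  rw [Co.zsmul_apply]
  exact (zsmul_eq_mul (1 : ℤ) m).trans (by simp)

lemma const_mul (h : Co 0) : ∃ m : ℤ, dd 0 h = m • one1 :=
  ⟨h, Co.ext fun y => (zsmul_one1 h y).symm⟩

lemma stepB {y : Co 3} (hy : y ∈ IG 3) (hB : y ∈ Bd 6 2) :
    ∃ h : ℤ, rel 0 ((3 : ℤ) • y) (h • one1) := by
  obtain ⟨v, hv, rfl⟩ := hB
  set z := tp 1 2 v - v with hz
  have hzI : z ∈ Inv 6 2 := sub_mem (Inv6_tp 1 hv) hv
  have hzd : dd 2 z = 0 := by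
    rw [hz, map_sub, ← tp_dd, hy.2, sub_self]
  obtain ⟨l, g, hg, hgl⟩ := gen1 hzI hzd
  have hw : tp 1 2 ((3 : ℤ) • v - f1 (mu3 l)) - ((3 : ℤ) • v - f1 (mu3 l))
      = dd 1 ((3 : ℤ) • g) := by
    rw [map_zsmul, hgl, smul_sub, ← f1_mu, hz, smul_sub, map_sub, map_zsmul]
    abel
  have hN : dd 1 (NN 1 ((3 : ℤ) • g)) = 0 := by
    rw [← NN_dd, ← hw, map_sub, NN_tp, sub_self]
  have := exact_dd hN 1
  obtain ⟨m, hm⟩ := const_mul (NN 1 ((3 : ℤ) • g) 1)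
  rw [hm] at this
  refine ⟨m, (3 : ℤ) • v - f1 (mu3 l), sub_mem (zsmul_mem hv 3) (f1_Inv _), (3 : ℤ) • g,
    zsmul_mem hg 3, ?_, hw, this⟩
  rw [map_sub, f1_cocycle, map_zsmul, sub_zero]

lemma alt_f2 (c) (i j : Fin 6) : alt i j (f2 c) = c i j - c j i := by
  unfold f2
  rw [alt_c2]
  simp [bf, ev, Pi.single_apply]

lemma alt_inv {y : Co 3} {c} (hy : y ∈ IG 3) (hc : y - f2 c ∈ Bd 6 2) (i j : Fin 6) :
    bf c (holM *ᵥ ev i) (holM *ᵥ ev j) - bf c (holM *ᵥ ev j) (holM *ᵥ ev i) = c i j - c j i := by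
  have h1 := alt_Bd i j hc
  have h2 := alt_Bd i j (Bd6_tp 1 hc)
  rw [map_sub, alt_sub, hy.2] at h2
  rw [alt_sub, alt_f2] at h1
  unfold f2 at h2
  rw [c2_tp, alt_c2, pow_one] at h2
  linarith

lemma holM_ev : (fun i => holM *ᵥ ev i) = ![![0,1,0,0,0,0], ![0,0,1,0,0,0], ![0,0,0,1,0,0],
    ![0,0,0,0,1,0], ![0,0,0,0,0,1], ![-1,-1,0,1,0,-1]] := by
  unfold ev
  decide +kernel

lemma alt_form {c : Fin 6 → Fin 6 → ℤ} (h : ∀ i j,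
    bf c (holM *ᵥ ev i) (holM *ᵥ ev j) - bf c (holM *ᵥ ev j) (holM *ᵥ ev i) = c i j - c j i)
    (i j : Fin 6) : c i j - c j i = (c 0 3 - c 3 0) * T1 i j + (c 0 2 - c 2 0) * T2 i j
      + (c 0 1 - c 1 0) * T3 i j := by
  have e0 := congrFun holM_ev 0
  have e1 := congrFun holM_ev 1
  have e2 := congrFun holM_ev 2
  have e3 := congrFun holM_ev 3
  have e4 := congrFun holM_ev 4
  have e5 := congrFun holM_ev 5
  have a01 := h 0 1
  have a02 := h 0 2
  have a03 := h 0 3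
  have a04 := h 0 4
  have a05 := h 0 5
  have a12 := h 1 2
  have a13 := h 1 3
  have a14 := h 1 4
  have a15 := h 1 5
  have a23 := h 2 3
  have a24 := h 2 4
  have a25 := h 2 5
  have a34 := h 3 4
  have a35 := h 3 5
  have a45 := h 4 5
  clear h
  simp only [e0, e1, e2, e3, e4, e5] at a01 a02 a03 a04 a05 a12 a13 a14 a15 a23 a24 a25 a34 a35 a45
  clear e0 e1 e2 e3 e4 e5
  simp [bf, Fin.sum_univ_six] at a01 a02 a03 a04 a05 a12 a13 a14 a15 a23 a24 a25 a34 a35 a45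
  fin_cases i <;> fin_cases j <;> simp [T1, T2, T3] <;> linarith

lemma stepC {y : Co 3} (hy : y ∈ IG 3) (hd : dd 3 y = 0) : ∃ b1 b2 b3 : ℤ,
    (6 : ℤ) • y - (b1 • NN 3 (c2 V1) + b2 • NN 3 (c2 V2) + b3 • NN 3 (c2 V3)) ∈ Bd 6 2 := by
  obtain ⟨c, hc⟩ := gen2 hy.1 hd
  have hf := alt_form (alt_inv hy hc)
  refine ⟨c 0 3 - c 3 0, c 0 2 - c 2 0, c 0 1 - c 1 0, ?_⟩
  set b1 := c 0 3 - c 3 0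
  set b2 := c 0 2 - c 2 0
  set b3 := c 0 1 - c 1 0
  have key : ∀ {F}, rel 2 0 (NN 3 (c2 F)) → dd 3 (NN 3 (c2 F)) = 0 := by
    rintro F ⟨u, hu, v, hv, -, h, h'⟩
    rw [← h', ← NN_dd, ← h, map_sub, NN_tp, sub_self]
  set w := (6 : ℤ) • y - (b1 • NN 3 (c2 V1) + b2 • NN 3 (c2 V2) + b3 • NN 3 (c2 V3)) with hw
  have hwI : w ∈ Inv 6 3 := sub_mem (zsmul_mem hy.1 _) (add_mem (add_mem
    (zsmul_mem (Inv6_NN (c2_Inv _)) _) (zsmul_mem (Inv6_NN (c2_Inv _)) _))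
    (zsmul_mem (Inv6_NN (c2_Inv _)) _))
  have hwd : dd 3 w = 0 := by
    rw [hw]
    simp only [map_sub, map_add, map_zsmul, hd, key rel_V1, key rel_V2, key rel_V3, smul_zero,
      add_zero, sub_zero]
  obtain ⟨c', hc'⟩ := gen2 hwI hwd
  have hy' : ∀ i j, alt i j y = c i j - c j i := by
    intro i j
    have := alt_Bd i j hc
    rw [alt_sub, alt_f2] at this
    linarith
  have hs : ∀ i j, c' i j = c' j i := by
    intro i j
    have := alt_Bd i j hc'
    rw [alt_sub, alt_f2, hw, alt_sub, alt_add, alt_add, alt_smul, alt_smul, alt_smul, alt_smul,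
      alt_V1, alt_V2, alt_V3, hy', hf i j] at this
    linarith
  have := add_mem hc' (form_symm_mem hs)
  rwa [sub_add_cancel] at this

theorem core : ∃ E ∈ IG 5, dd 5 E = 0 ∧ ∀ x ∈ IG 5, dd 5 x = 0 → (4 : ℤ) • x ∈ BG 4 →
    ∃ h : ℤ, (54 : ℤ) • x - h • E ∈ BG 4 := by
  obtain ⟨e, he, hed, hre⟩ := rel_exists one1_IG (dd_dd _)
  obtain ⟨E, hE, hEd, hrE⟩ := rel_exists he hed
  refine ⟨E, hE, hEd, fun x hx hxd h4 => ?_⟩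
  obtain ⟨y, hy, hyd, hxy⟩ := chainA hx hxd h4
  obtain ⟨b1, b2, b3, hB⟩ := stepC hy hyd
  have hI : (6 : ℤ) • y - (b1 • NN 3 (c2 V1) + b2 • NN 3 (c2 V2) + b3 • NN 3 (c2 V3)) ∈ IG 3 :=
    sub_mem (zsmul_mem hy _) (add_mem (add_mem
    (zsmul_mem (IG_NN (c2_Inv _)) _) (zsmul_mem (IG_NN (c2_Inv _)) _))
    (zsmul_mem (IG_NN (c2_Inv _)) _))
  obtain ⟨h, hh⟩ := stepB hI hB
  refine ⟨h, ?_⟩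
  have r1 := rel_add hh (rel_smul hre (-h))
  have r2 := rel_zero r1 (by
    have : h • one1 + -h • one1 = 0 := by rw [neg_smul, add_neg_cancel]
    rw [this]; exact zero_mem _)
  have r3 := rel_add (rel_add (rel_add (rel_add (rel_smul hxy 18) (rel_smul rel_V1 (-3 * b1)))
    (rel_smul rel_V2 (-3 * b2))) (rel_smul rel_V3 (-3 * b3))) (rel_smul hrE (-h))
  have r4 := rel_zero r3 (by
    convert r2 using 1
    module)
  convert r4 using 1
  module

end Crystal

open Matrix

namespace Crystal
open CategoryTheory groupCohomology

section
variable {G : Type} [Group G] {A : Rep ℤ G}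

lemma iCocycles_inj {n : ℕ} {x y : cocycles A n}
    (h : iCocycles A n x = iCocycles A n y) : x = y :=
  (ModuleCat.mono_iff_injective (iCocycles A n)).1 inferInstance h

lemma iCocycles_d {n : ℕ} (z : cocycles A n) :
    inhomogeneousCochains.d A n (iCocycles A n z) = 0 := by
  have := (inhomogeneousCochains A).iCycles_d n (n + 1)
  rw [inhomogeneousCochains.d_def] at this
  have h := congrArg (fun φ => φ.hom z) this
  exact h

/-- the class of a cocycle -/
noncomputable def cls {n : ℕ} (f : (Fin n → G) → A) (h : inhomogeneousCochains.d A n f = 0) :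
    groupCohomology A n := π A n (cocyclesMk f h)

lemma cls_surj {n : ℕ} (x : groupCohomology A n) : ∃ f h, x = cls (A := A) (n := n) f h := by
  induction x using groupCohomology_induction_on with
  | h z =>
    refine ⟨iCocycles A n z, iCocycles_d z, ?_⟩
    unfold cls
    congr 1
    apply iCocycles_inj
    rw [iCocycles_mk]

lemma π_eq_zero_iff {n : ℕ} (z : cocycles A (n + 1)) :
    π A (n + 1) z = 0 ↔ ∃ g, inhomogeneousCochains.d A n g = iCocycles A (n + 1) z := by
  have hd : ∀ g : (inhomogeneousCochains A).X n, iCocycles A (n + 1) (toCocycles A n (n + 1) g)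
      = inhomogeneousCochains.d A n g := by
    intro g
    have := (inhomogeneousCochains A).toCycles_i n (n + 1)
    rw [inhomogeneousCochains.d_def] at this
    exact congrArg (fun φ => φ.hom g) this
  have hex := ShortComplex.exact_of_g_is_cokernel (ShortComplex.mk _ _
    ((inhomogeneousCochains A).toCycles_comp_homologyπ n (n + 1)))
    ((inhomogeneousCochains A).homologyIsCokernel n (n + 1) (by simp))
  rw [ShortComplex.moduleCat_exact_iff] at hex
  constructor
  · intro h
    obtain ⟨g, hg⟩ := hex z h
    refine ⟨g, ?_⟩
    rw [← hd]
    exact congrArg _ hg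
  · rintro ⟨g, hg⟩
    rw [← hd] at hg
    rw [← iCocycles_inj hg]
    have := (inhomogeneousCochains A).toCycles_comp_homologyπ n (n + 1)
    exact congrArg (fun φ => φ.hom g) this

lemma cls_eq_zero_iff {n : ℕ} {f : (Fin (n + 1) → G) → A} {h} :
    cls (A := A) f h = 0 ↔ ∃ g, inhomogeneousCochains.d A n g = f := by
  unfold cls
  rw [π_eq_zero_iff, iCocycles_mk]

lemma cls_comb {n : ℕ} {f g : (Fin n → G) → A} {hf hg} (a b : ℤ)
    (h : inhomogeneousCochains.d A n (a • f - b • g) = 0) :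
    a • cls (A := A) f hf - b • cls (A := A) g hg = cls (a • f - b • g) h := by
  unfold cls
  rw [← map_zsmul, ← map_zsmul, ← map_sub]
  congr 1
  apply iCocycles_inj
  rw [map_sub, map_zsmul, map_zsmul, iCocycles_mk, iCocycles_mk, iCocycles_mk]
end
end Crystal

open Matrix

namespace Crystal
open CategoryTheory groupCohomology

/-- uncurrying -/
def unc : ∀ n, Co n → (Fin n → Gam) → ℤ
  | 0, c, _ => c
  | n + 1, f, v => unc n (f (v 0)) (fun i => v i.succ)

/-- currying -/
def cur : ∀ n, ((Fin n → Gam) → ℤ) → Co n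
  | 0, F => F Fin.elim0
  | n + 1, F => fun y => cur n (fun v => F (Fin.cons y v))

lemma unc_succ {n : ℕ} (f : Co (n + 1)) (v) : unc (n + 1) f v = unc n (f (v 0)) (fun i => v i.succ) :=
  rfl

lemma unc_cur : ∀ {n : ℕ} (F : (Fin n → Gam) → ℤ) (v), unc n (cur n F) v = F v
  | 0, F, v => congrArg F (Subsingleton.elim _ _)
  | n + 1, F, v => by
    rw [unc_succ]
    show unc n (cur n (fun w => F (Fin.cons (v 0) w))) _ = _
    rw [unc_cur]
    exact congrArg F (Fin.cons_self_tail v)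

lemma unc_inj : ∀ {n : ℕ} {f g : Co n} (_ : ∀ v, unc n f v = unc n g v), f = g
  | 0, _, _, h => h Fin.elim0
  | n + 1, f, g, h => by
    apply Co.ext; intro y
    apply unc_inj; intro v
    have := h (Fin.cons y v)
    exact this

lemma unc_add : ∀ {n : ℕ} (f g : Co n) (v), unc n (f + g) v = unc n f v + unc n g v
  | 0, _, _, _ => rfl
  | n + 1, f, g, v => unc_add (f (v 0)) (g (v 0)) _

/-- uncurrying as a homomorphism -/
def uncH (n : ℕ) (v : Fin n → Gam) : Co n →+ ℤ := AddMonoidHom.mk' (fun f => unc n f v)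
  fun f g => unc_add f g v

lemma unc_sub {n : ℕ} (f g : Co n) (v) : unc n (f - g) v = unc n f v - unc n g v :=
  map_sub (uncH n v) f g

lemma unc_zsmul {n : ℕ} (m : ℤ) (f : Co n) (v) : unc n (m • f) v = m * unc n f v :=
  (map_zsmul (uncH n v) m f).trans (smul_eq_mul _ _)

lemma unc_pl (g : Gam) : ∀ {n : ℕ} (f : Co n) (v), unc n (pl g n f) v = unc n f (fun i => g * v i)
  | 0, _, _ => rfl
  | n + 1, f, v => by
    rw [unc_succ, pl_apply, unc_pl g]; rfl

lemma unc_dd : ∀ {n : ℕ} (f : Co n) (v : Fin (n + 1) → Gam), unc (n + 1) (dd n f) v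
    = ∑ j : Fin (n + 1), (-1) ^ (j : ℕ) * unc n f (fun i => v (j.succAbove i))
  | 0, f, v => by
    rw [Fin.sum_univ_one]
    simp only [Fin.val_zero, pow_zero, one_mul]
    rfl
  | n + 1, f, v => by
    rw [unc_succ, dd_succ_apply, unc_sub, unc_dd]
    conv_rhs => rw [Fin.sum_univ_succ]
    simp only [Fin.val_zero, pow_zero, one_mul, Fin.zero_succAbove, sub_eq_add_neg,
      Fin.val_succ, pow_succ, mul_neg, mul_one, neg_mul, Finset.sum_neg_distrib]
    congr 2
    refine Finset.sum_congr rfl fun j _ => ?_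
    rw [unc_succ]
    simp

/-- successive quotients -/
def dl {n : ℕ} (v : Fin (n + 1) → Gam) : Fin n → Gam := fun i => (v i.castSucc)⁻¹ * v i.succ

/-- homogeneous cochain of an inhomogeneous cochain -/
def psi (n : ℕ) (F : (Fin n → Gam) → ℤ) : Co (n + 1) := cur (n + 1) fun v => F (dl v)

lemma unc_psi {n : ℕ} (F : (Fin n → Gam) → ℤ) (v) : unc (n + 1) (psi n F) v = F (dl v) := unc_cur _ _

lemma dl_partialProd {n : ℕ} (w : Fin n → Gam) : dl (Fin.partialProd w) = w := by
  funext i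
  exact Fin.partialProd_right_inv w i

lemma psi_inj {n : ℕ} {F G : (Fin n → Gam) → ℤ} (h : psi n F = psi n G) : F = G := by
  funext w
  rw [← dl_partialProd w, ← unc_psi F, ← unc_psi G, h]

lemma psi_IG {n : ℕ} (F : (Fin n → Gam) → ℤ) : psi n F ∈ IG (n + 1) := by
  refine mem_IG_of_pl fun g => unc_inj fun v => ?_
  rw [unc_pl, unc_psi, unc_psi]
  congr 1
  funext i
  simp [dl, mul_assoc]

lemma psi_surj {n : ℕ} {f : Co (n + 1)} (h : f ∈ IG (n + 1)) : ∃ F, psi n F = f := by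
  refine ⟨fun w => unc (n + 1) f (Fin.partialProd w), unc_inj fun v => ?_⟩
  rw [unc_psi]
  have h1 := IG_pl h (v 0)
  conv_rhs => rw [← Fin.partialProd_left_inv v]
  conv_lhs => rw [← h1]
  rw [unc_pl]
  rfl

lemma psi_comb {n : ℕ} (a b : ℤ) (F G : (Fin n → Gam) → ℤ) :
    psi n (a • F - b • G) = a • psi n F - b • psi n G := by
  refine unc_inj fun v => ?_
  rw [unc_sub, unc_zsmul, unc_zsmul, unc_psi, unc_psi, unc_psi]
  simp

lemma dl_succAbove {n : ℕ} (v : Fin (n + 2) → Gam) (i : Fin (n + 1)) :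
    dl (fun k => v (i.succ.succAbove k)) = Fin.contractNth i (· * ·) (dl v) := by
  funext k
  show (v (i.succ.succAbove k.castSucc))⁻¹ * v (i.succ.succAbove k.succ) = _
  rcases lt_trichotomy (k : ℕ) i with h | h | h
  · rw [Fin.contractNth_apply_of_lt _ _ _ _ h,
      Fin.succAbove_of_castSucc_lt i.succ k.castSucc (by simp [Fin.lt_def]; omega),
      Fin.succAbove_of_castSucc_lt i.succ k.succ (by simp [Fin.lt_def]; omega)]
    rfl
  · rw [Fin.contractNth_apply_of_eq _ _ _ _ h,
      Fin.succAbove_of_castSucc_lt i.succ k.castSucc (by simp [Fin.lt_def]; omega),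
      Fin.succAbove_of_le_castSucc i.succ k.succ (by simp [Fin.le_def]; omega)]
    simp [dl, mul_assoc]
  · rw [Fin.contractNth_apply_of_gt _ _ _ _ h,
      Fin.succAbove_of_le_castSucc i.succ k.castSucc (by simp [Fin.le_def]; omega),
      Fin.succAbove_of_le_castSucc i.succ k.succ (by simp [Fin.le_def]; omega)]
    rfl

lemma psi_d {n : ℕ} (F : (Fin n → Gam) → ℤ) :
    dd (n + 1) (psi n F)
      = psi (n + 1) (inhomogeneousCochains.d (Rep.trivial ℤ Gam ℤ) n F) := by
  refine unc_inj fun v => ?_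
  rw [unc_dd, unc_psi, inhomogeneousCochains.d_hom_apply, Fin.sum_univ_succ]
  simp only [unc_psi, dl_succAbove, Fin.val_zero, pow_zero, one_mul, Fin.zero_succAbove,
    Fin.val_succ]
  rfl

theorem LHS : ∃ E : H 4, ∀ x : H 4, (4 : ℤ) • x = 0 → ∃ h : ℤ, (54 : ℤ) • x = h • E := by
  obtain ⟨E, hE, hEd, hall⟩ := core
  obtain ⟨FE, rfl⟩ := psi_surj hE
  have hd : ∀ {F : (Fin 4 → Gam) → ℤ}, inhomogeneousCochains.d (Rep.trivial ℤ Gam ℤ) 4 F = 0 ↔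
      dd 5 (psi 4 F) = 0 := by
    intro F
    rw [psi_d]
    have h0 : psi 5 0 = 0 := by
      have := psi_comb 0 0 (0 : (Fin 5 → Gam) → ℤ) 0
      simpa using this
    constructor
    · intro h; rw [h]; exact h0
    · intro h; exact psi_inj (h.trans h0.symm)
  refine ⟨cls (A := Rep.trivial ℤ Gam ℤ) FE (hd.2 hEd), fun x hx => ?_⟩
  obtain ⟨f, hf, rfl⟩ := cls_surj x
  have h4 : inhomogeneousCochains.d (Rep.trivial ℤ Gam ℤ) 4 ((4 : ℤ) • f - (0 : ℤ) • f) = 0 := by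
    rw [map_sub, map_zsmul, map_zsmul, hf]; simp
  have e4 := cls_comb (hf := hf) (hg := hf) 4 0 h4
  rw [hx, zero_smul, sub_zero] at e4
  obtain ⟨g, hg⟩ := cls_eq_zero_iff.1 e4.symm
  obtain ⟨h, w, hw, hwe⟩ := hall (psi 4 f) (psi_IG f) (hd.1 hf) ⟨psi 3 g, psi_IG g, by
    rw [psi_d, hg]
    exact (psi_comb 4 0 f f).trans (by simp)⟩
  obtain ⟨W, rfl⟩ := psi_surj hw
  rw [psi_d, ← psi_comb] at hwe
  have hW := psi_inj hwe
  refine ⟨h, sub_eq_zero.1 ?_⟩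
  have hz : inhomogeneousCochains.d (Rep.trivial ℤ Gam ℤ) 4 ((54 : ℤ) • f - h • FE) = 0 := by
    rw [map_sub, map_zsmul, map_zsmul, hf, hd.2 hEd]; simp
  rw [cls_comb _ _ hz, cls_eq_zero_iff]
  exact ⟨W, hW⟩

end Crystal

open Matrix

namespace Crystal
open CategoryTheory groupCohomology

abbrev C12 : Type := Multiplicative (ZMod 12)

/-- the chosen generator -/
def zg : C12 := Multiplicative.ofAdd (-1)

lemma zg_pow (x : C12) : ∃ n : ℕ, zg ^ n = x := by
  revert x
  show ∀ x : ZMod 12, ∃ n : ℕ, (Multiplicative.ofAdd (-1 : ZMod 12)) ^ n = Multiplicative.ofAdd x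
  intro x
  refine ⟨(-x).val, ?_⟩
  rw [← ofAdd_nsmul]
  congr 1
  simp

lemma zg_gen (x : C12) : x ∈ Subgroup.zpowers zg := by
  obtain ⟨n, rfl⟩ := zg_pow x
  exact Subgroup.npow_mem_zpowers _ _

lemma exists_order4 {k : Type} [CommRing k] (A : Rep k C12) (i : ℕ) [NeZero i] (hi : Even i) (x : A)
    (hx : A.ρ zg x = x) (h6 : ∀ y : A, ∑ g, A.ρ g y ≠ (6 : ℕ) • x) :
    ∃ u : groupCohomology A i, (4 : ℕ) • u = 0 ∧ (2 : ℕ) • u ≠ 0 := by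
  have hall : ∀ g, A.ρ g x = x := by
    intro g
    obtain ⟨n, rfl⟩ := zg_pow g
    induction n with
    | zero => simp
    | succ n ih => rw [pow_succ, map_mul, Module.End.mul_apply, hx, ih]
  have hk : ((3 : ℕ) • x) ∈ LinearMap.ker (A.applyAsHom zg - 𝟙 A).hom.toLinearMap := by
    refine Submodule.smul_of_tower_mem _ _ ?_
    show A.ρ zg x - x = 0
    rw [hx, sub_self]
  refine ⟨Rep.FiniteCyclicGroup.groupCohomologyπEven A zg zg_gen i hi ⟨(3 : ℕ) • x, hk⟩, ?_, ?_⟩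
  · rw [← map_nsmul, Rep.FiniteCyclicGroup.groupCohomologyπEven_eq_zero_iff]
    refine ⟨x, ?_⟩
    show A.ρ.norm x = (4 : ℕ) • (3 : ℕ) • x
    rw [Representation.norm, LinearMap.sum_apply]
    simp only [hall]
    rw [Finset.sum_const, smul_smul, Finset.card_univ]
    have : Fintype.card C12 = 12 := rfl
    rw [this]; norm_num
  · intro h
    rw [← map_nsmul, Rep.FiniteCyclicGroup.groupCohomologyπEven_eq_zero_iff] at h
    obtain ⟨y, hy⟩ := h
    refine h6 y ?_
    have hy' : A.ρ.norm y = (2 : ℕ) • (3 : ℕ) • x := hy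
    rw [Representation.norm, LinearMap.sum_apply] at hy'
    rw [hy', smul_smul]; norm_num

abbrev TL : Rep ℤ (Lat 6) := Rep.trivial ℤ (Lat 6) ℤ
noncomputable abbrev phi : C12 →* MulAut (Lat 6) := matAction 12 holM holM_pow
noncomputable abbrev CR (j : ℕ) : Rep ℤ C12 := cohRep phi (1 : Representation ℤ C12 ℤ) j

/-- pullback of a cochain -/
noncomputable def pb (g : C12) {n : ℕ} (f : (Fin n → Lat 6) → TL) : (Fin n → Lat 6) → TL :=
  fun v => f (fun i => phi g⁻¹ (v i))

noncomputable abbrev cm (g : C12) := cochainsMap TL TL (phi g⁻¹).toMonoidHom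
  ((1 : Representation ℤ C12 ℤ) g) (fun _ _ => rfl)

lemma pb_d (g : C12) {n : ℕ} (f : (Fin n → Lat 6) → TL) (h : inhomogeneousCochains.d TL n f = 0) :
    inhomogeneousCochains.d TL n (pb g f) = 0 := by
  have := (cm g).comm n (n + 1)
  rw [inhomogeneousCochains.d_def] at this
  have h2 := congrArg (fun F => F.hom f) this
  refine Eq.trans h2 ?_
  show (cm g).f (n+1) (inhomogeneousCochains.d TL n f) = 0
  rw [h, map_zero]

lemma act_cls (g : C12) {n : ℕ} (f : (Fin n → Lat 6) → TL) (h : inhomogeneousCochains.d TL n f = 0) :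
    (CR n).ρ g (cls f h : groupCohomology TL n) = (cls (pb g f) (pb_d g f h) : groupCohomology TL n) := by
  have h1 := HomologicalComplex.homologyπ_naturality (cm g) n
  have h2 := congrArg (fun F => F.hom (cocyclesMk f h)) h1
  refine Eq.trans h2 ?_
  unfold cls
  refine congrArg (π TL n) ?_
  apply iCocycles_inj
  rw [iCocycles_mk]
  have h3 := HomologicalComplex.cyclesMap_i (cm g) n
  have h4 := congrArg (fun F => F.hom (cocyclesMk f h)) h3
  refine Eq.trans h4 ?_
  show (cm g).f n (iCocycles TL n (cocyclesMk f h)) = _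
  rw [iCocycles_mk]
  rfl

/-! degree zero -/
lemma ev0_inj {f g : (Fin 0 → Lat 6) → TL} {hf hg} (h : cls (A := TL) f hf = cls g hg) : f = g := by
  have : IsIso (π TL 0) := by
    exact CochainComplex.isIso_homologyπ₀ _
  have hi : Function.Injective (π TL 0) := (ModuleCat.mono_iff_injective _).1 inferInstance
  have := congrArg (iCocycles TL 0) (hi h)
  rwa [iCocycles_mk, iCocycles_mk] at this
end Crystal

open Matrix

namespace Crystal
open CategoryTheory groupCohomology

lemma d_zero_of0 (f : (Fin 0 → Lat 6) → TL) : inhomogeneousCochains.d TL 0 f = 0 := by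
  funext v
  have := inhomogeneousCochains.d_hom_apply (A := TL) 0 f v
  refine this.trans ?_
  rw [Fin.sum_univ_one]
  rw [Subsingleton.elim (fun i : Fin 0 => v i.succ) Fin.elim0,
    Subsingleton.elim (Fin.contractNth (0 : Fin 1) (· * ·) v) Fin.elim0]
  show f _ + (-1 : ℤ) ^ (0 + 1) * f _ = 0
  ring

lemma deg0_nsmul {n : ℕ} {f : (Fin n → Lat 6) → TL} {hf} (m : ℕ)
    (h : inhomogeneousCochains.d TL n (m • f) = 0) :
    m • cls (A := TL) f hf = cls (m • f) h := by
  unfold cls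
  rw [← map_nsmul]
  congr 1
  apply iCocycles_inj
  rw [map_nsmul, iCocycles_mk, iCocycles_mk]

lemma ex40 : ∃ u : Hc 4 0, 4 • u = 0 ∧ 2 • u ≠ 0 := by
  have hinv : ∀ (g : C12) (f : (Fin 0 → Lat 6) → TL) (h), (CR 0).ρ g (cls f h : groupCohomology TL 0)
      = (cls f h : groupCohomology TL 0) := by
    intro g f h
    rw [act_cls]
    congr 1
    funext v
    exact congrArg f (Subsingleton.elim _ _)
  refine exists_order4 (CR 0) 4 (by decide)
    (cls (fun _ => (1 : ℤ)) (d_zero_of0 _) : groupCohomology TL 0) (hinv _ _ _) ?_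
  intro y hy
  obtain ⟨f, h, rfl⟩ := cls_surj (A := TL) (n := 0) y
  have h2 : 12 • (cls f h : groupCohomology TL 0) = 6 • (cls (fun _ => (1 : ℤ)) (d_zero_of0 _) : groupCohomology TL 0) :=
    ((Finset.sum_congr rfl fun g _ => hinv g f h).trans (Finset.sum_const _)).symm.trans hy
  rw [deg0_nsmul _ (d_zero_of0 _), deg0_nsmul _ (d_zero_of0 _)] at h2
  have h3 := congrFun (ev0_inj h2) Fin.elim0
  have h4 : (12 : ℕ) • (f Fin.elim0 : ℤ) = (6 : ℕ) • (1 : ℤ) := h3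
  simp only [nsmul_eq_mul] at h4
  push_cast at h4
  omega

end Crystal

open Matrix

namespace Crystal
open CategoryTheory groupCohomology

/-- the relevant orbit sums -/
def Dm (i j : Fin 6) : ℤ := ∑ m : Fin 12,
  ((orbN m.val i * orbN (3 + m.val) j - orbN m.val j * orbN (3 + m.val) i) +
    2 * (orbN m.val i * orbN (2 + m.val) j - orbN m.val j * orbN (2 + m.val) i))

lemma Dm_dvd (i j : Fin 6) : (4 : ℤ) ∣ Dm i j := by
  revert i j; decide +kernel

lemma div4 (A : (Fin 6 → ℤ) → (Fin 6 → ℤ) → ℤ) (h1 : ∀ a b c, A (a + b) c = A a c + A b c)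
    (hs : ∀ a b, A a b = - A b a) :
    (4 : ℤ) ∣ ∑ m : Fin 12, (A (orbN m.val) (orbN (3 + m.val))
      + 2 * A (orbN m.val) (orbN (2 + m.val))) := by
  have h2 : ∀ a b c, A a (b + c) = A a b + A a c := by
    intro a b c
    rw [hs, h1, hs b, hs c]; ring
  let B : (Fin 6 → ℤ) →+ (Fin 6 → ℤ) →+ ℤ :=
    AddMonoidHom.mk' (fun a => AddMonoidHom.mk' (A a) (h2 a)) (by
      intro a b; ext c; simp [h1])
  have hB : ∀ a b, A a b = B a b := fun _ _ => rfl
  have hsum : ∀ a : Fin 6 → ℤ, a = ∑ i, a i • ev i := by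
    intro a
    funext k
    simp [ev, Finset.sum_apply, Pi.single_apply]
  have hA : ∀ a b, A a b = ∑ i, ∑ j, a i * (b j * A (ev i) (ev j)) := by
    intro a b
    conv_lhs => rw [hB, hsum a, hsum b]
    simp only [map_sum, map_zsmul, AddMonoidHom.finsetSum_apply, AddMonoidHom.smul_apply,
      smul_eq_mul, ← hB, Finset.mul_sum]
    rw [Finset.sum_comm]
    refine Finset.sum_congr rfl fun i _ => Finset.sum_congr rfl fun j _ => by ring
  let c : Fin 6 → Fin 6 → ℤ := fun i j => if i < j then A (ev i) (ev j) else 0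
  have hc : ∀ i j, A (ev i) (ev j) = c i j - c j i := by
    intro i j
    simp only [c]
    rcases lt_trichotomy i j with h | h | h
    · simp [h, h.not_gt]
    · subst h
      have := hs (ev i) (ev i)
      simp; omega
    · simp only [h, h.not_gt, if_true, if_false]
      rw [hs]; ring
  have hA2 : ∀ a b, A a b = ∑ i, ∑ j, c i j * (a i * b j - a j * b i) := by
    intro a b
    rw [hA]
    simp only [hc, mul_sub, Finset.sum_sub_distrib]
    congr 1
    · refine Finset.sum_congr rfl fun i _ => Finset.sum_congr rfl fun j _ => by ring
    · rw [Finset.sum_comm]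
      refine Finset.sum_congr rfl fun i _ => Finset.sum_congr rfl fun j _ => by ring
  have hfin : ∑ m : Fin 12, (A (orbN m.val) (orbN (3 + m.val))
      + 2 * A (orbN m.val) (orbN (2 + m.val))) = ∑ i, ∑ j, c i j * Dm i j := by
    simp only [hA2, Dm, Finset.mul_sum, ← Finset.sum_add_distrib]
    rw [Finset.sum_comm]
    refine Finset.sum_congr rfl fun i _ => ?_
    rw [Finset.sum_comm]
    refine Finset.sum_congr rfl fun j _ => Finset.sum_congr rfl fun m _ => by ring
  rw [hfin]
  exact Finset.dvd_sum fun i _ => Finset.dvd_sum fun j _ => Dvd.dvd.mul_left (Dm_dvd i j) _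

lemma phi_apply (g : C12) (a : Fin 6 → ℤ) : phi g (Multiplicative.ofAdd a)
    = Multiplicative.ofAdd ((holM ^ (ZMod.val g.toAdd)) *ᵥ a) := by
  show ((_ : MulAut (Lat 6)) ^ (ZMod.val g.toAdd)) _ = _
  generalize ZMod.val g.toAdd = m
  induction m with
  | zero => simp
  | succ m ih =>
    rw [pow_succ', MulAut.mul_apply, ih, pow_succ', ← Matrix.mulVec_mulVec]
    rfl

/-- evaluate a two-cochain -/
def v2 (f : (Fin 2 → Lat 6) → TL) (a b : Fin 6 → ℤ) : ℤ :=
  f ![Multiplicative.ofAdd a, Multiplicative.ofAdd b]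

/-- evaluate a one-cochain -/
def v1 (f : (Fin 1 → Lat 6) → TL) (a : Fin 6 → ℤ) : ℤ := f ![Multiplicative.ofAdd a]

lemma v2_d (q : (Fin 1 → Lat 6) → TL) (a b) :
    v2 (inhomogeneousCochains.d TL 1 q) a b = v1 q b - v1 q (a + b) + v1 q a := by
  refine (inhomogeneousCochains.d_hom_apply (A := TL) 1 q _).trans ?_
  rw [Fin.sum_univ_two]
  have e0 : (fun i : Fin 1 => (![Multiplicative.ofAdd a, Multiplicative.ofAdd b] : Fin 2 → Lat 6) i.succ)
    = ![Multiplicative.ofAdd b] := by funext i; fin_cases i; rfl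
  have e1 : (Fin.contractNth (0 : Fin 2) (· * ·) (![Multiplicative.ofAdd a, Multiplicative.ofAdd b] : Fin 2 → Lat 6))
    = ![Multiplicative.ofAdd (a + b)] := by funext i; fin_cases i; rfl
  have e2 : (Fin.contractNth (1 : Fin 2) (· * ·) (![Multiplicative.ofAdd a, Multiplicative.ofAdd b] : Fin 2 → Lat 6))
    = ![Multiplicative.ofAdd a] := by funext i; fin_cases i; rfl
  rw [e0, e1, e2]
  show v1 q b + ((-1 : ℤ) ^ (0 + 1) * v1 q (a + b) + (-1 : ℤ) ^ (1 + 1) * v1 q a) = _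
  ring

lemma v3_d (f : (Fin 2 → Lat 6) → TL) (a b c) :
    inhomogeneousCochains.d TL 2 f
      ![Multiplicative.ofAdd a, Multiplicative.ofAdd b, Multiplicative.ofAdd c]
    = v2 f b c - v2 f (a + b) c + v2 f a (b + c) - v2 f a b := by
  refine (inhomogeneousCochains.d_hom_apply (A := TL) 2 f _).trans ?_
  rw [Fin.sum_univ_three]
  have e0 : (fun i : Fin 2 => (![Multiplicative.ofAdd a, Multiplicative.ofAdd b, Multiplicative.ofAdd c] : Fin 3 → Lat 6) i.succ)
    = ![Multiplicative.ofAdd b, Multiplicative.ofAdd c] := by funext i; fin_cases i <;> rfl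
  have e1 : (Fin.contractNth (0 : Fin 3) (· * ·) (![Multiplicative.ofAdd a, Multiplicative.ofAdd b, Multiplicative.ofAdd c] : Fin 3 → Lat 6))
    = ![Multiplicative.ofAdd (a + b), Multiplicative.ofAdd c] := by funext i; fin_cases i <;> rfl
  have e2 : (Fin.contractNth (1 : Fin 3) (· * ·) (![Multiplicative.ofAdd a, Multiplicative.ofAdd b, Multiplicative.ofAdd c] : Fin 3 → Lat 6))
    = ![Multiplicative.ofAdd a, Multiplicative.ofAdd (b + c)] := by funext i; fin_cases i <;> rfl
  have e3 : (Fin.contractNth (2 : Fin 3) (· * ·) (![Multiplicative.ofAdd a, Multiplicative.ofAdd b, Multiplicative.ofAdd c] : Fin 3 → Lat 6))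
    = ![Multiplicative.ofAdd a, Multiplicative.ofAdd b] := by funext i; fin_cases i <;> rfl
  rw [e0, e1, e2, e3]
  show v2 f b c + ((-1 : ℤ) ^ (0 + 1) * v2 f (a + b) c + (-1 : ℤ) ^ (1 + 1) * v2 f a (b + c)
    + (-1 : ℤ) ^ (2 + 1) * v2 f a b) = _
  ring

lemma v2_pb (g : C12) (f : (Fin 2 → Lat 6) → TL) (a b) : v2 (pb g f) a b
    = v2 f ((holM ^ (ZMod.val (g⁻¹).toAdd)) *ᵥ a) ((holM ^ (ZMod.val (g⁻¹).toAdd)) *ᵥ b) := by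
  unfold v2 pb
  refine congrArg f ?_
  funext i
  fin_cases i
  · exact phi_apply g⁻¹ a
  · exact phi_apply g⁻¹ b

lemma ext2 {f g : (Fin 2 → Lat 6) → TL} (h : ∀ a b, v2 f a b = v2 g a b) : f = g := by
  funext v
  have : v = ![Multiplicative.ofAdd (v 0).toAdd, Multiplicative.ofAdd (v 1).toAdd] := by
    funext i; fin_cases i <;> rfl
  rw [this]
  exact h _ _

lemma cls_sum {ι : Type} (s : Finset ι) {n : ℕ} (f : ι → (Fin n → Lat 6) → TL)
    (hf : ∀ i, inhomogeneousCochains.d TL n (f i) = 0)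
    (h : inhomogeneousCochains.d TL n (∑ i ∈ s, f i) = 0) :
    ∑ i ∈ s, cls (A := TL) (f i) (hf i) = cls (∑ i ∈ s, f i) h := by
  unfold cls
  rw [← map_sum]
  congr 1
  apply iCocycles_inj
  rw [map_sum, iCocycles_mk]
  exact Finset.sum_congr rfl fun i _ => iCocycles_mk _ _

lemma cls_eq {f g : (Fin 2 → Lat 6) → TL} {hf hg} : cls (A := TL) f hf = cls g hg ↔
    ∃ q, inhomogeneousCochains.d TL 1 q = f - g := by
  have hd : inhomogeneousCochains.d TL 2 (f - g) = 0 := by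
    refine (map_sub (inhomogeneousCochains.d TL 2).hom f g).trans ?_
    show inhomogeneousCochains.d TL 2 f - inhomogeneousCochains.d TL 2 g = 0
    rw [hf, hg, sub_zero]
  rw [← sub_eq_zero]
  have : cls (A := TL) f hf - cls g hg = cls (f - g) hd := by
    unfold cls
    rw [← map_sub]
    congr 1
    apply iCocycles_inj
    rw [map_sub, iCocycles_mk, iCocycles_mk, iCocycles_mk]
  rw [this, cls_eq_zero_iff]

lemma v2_symm (q : (Fin 1 → Lat 6) → TL) (a b) :
    v2 (inhomogeneousCochains.d TL 1 q) a b = v2 (inhomogeneousCochains.d TL 1 q) b a := by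
  rw [v2_d, v2_d, add_comm a b]; ring

/-- the invariant class -/
def al : (Fin 2 → Lat 6) → TL := fun v =>
  let a := (v 0).toAdd
  let b := (v 1).toAdd
  (a 0 * b 3 - a 0 * b 4 + a 0 * b 5 + a 1 * b 4 - a 1 * b 5 + a 2 * b 5 : ℤ)

lemma v2_al (a b) : v2 al a b =
    a 0 * b 3 - a 0 * b 4 + a 0 * b 5 + a 1 * b 4 - a 1 * b 5 + a 2 * b 5 := rfl

lemma d_zero_of2 {f : (Fin 2 → Lat 6) → TL}
    (h : ∀ a b c, v2 f b c - v2 f (a + b) c + v2 f a (b + c) - v2 f a b = 0) :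
    inhomogeneousCochains.d TL 2 f = 0 := by
  funext v
  have : v = ![Multiplicative.ofAdd (v 0).toAdd, Multiplicative.ofAdd (v 1).toAdd,
      Multiplicative.ofAdd (v 2).toAdd] := by
    funext i; fin_cases i <;> rfl
  rw [this, v3_d, h]; rfl

lemma al_d : inhomogeneousCochains.d TL 2 al = 0 := by
  apply d_zero_of2
  intro a b c
  simp only [v2_al, Pi.add_apply]
  ring

lemma al_inv : (CR 2).ρ zg (cls al al_d : groupCohomology TL 2) = (cls al al_d : groupCohomology TL 2) := by
  rw [act_cls]
  apply cls_eq.2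
  refine ⟨fun v => ((v 0).toAdd 2 * (v 0).toAdd 5 + ch2 ((v 0).toAdd 5) : ℤ), ?_⟩
  apply ext2
  intro a b
  rw [v2_d]
  have h1 : ZMod.val (zg⁻¹).toAdd = 1 := rfl
  have h2 : v2 (pb zg al - al) a b = v2 (pb zg al) a b - v2 al a b := rfl
  rw [h2, v2_pb, h1, pow_one, v2_al, v2_al, holM_mulVec, holM_mulVec]
  show (b 2 * b 5 + ch2 (b 5)) - ((a + b) 2 * (a + b) 5 + ch2 ((a + b) 5)) + (a 2 * a 5 + ch2 (a 5)) = _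
  simp [ch2_add]
  ring

lemma alt_bilin {f : (Fin 2 → Lat 6) → TL} (h : inhomogeneousCochains.d TL 2 f = 0) (a b c) :
    v2 f (a + b) c - v2 f c (a + b) = (v2 f a c - v2 f c a) + (v2 f b c - v2 f c b) := by
  have hh : ∀ a b c, v2 f b c - v2 f (a + b) c + v2 f a (b + c) - v2 f a b = 0 := by
    intro a b c
    rw [← v3_d, h]; rfl
  have h1 := hh a b c
  have h2 := hh c a b
  have h3 := hh a c b
  rw [add_comm c a] at h2
  rw [add_comm c b] at h3
  linarith

lemma sum_v2 {ι : Type} (s : Finset ι) (f : ι → (Fin 2 → Lat 6) → TL) (a b) :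
    v2 (∑ i ∈ s, f i) a b = ∑ i ∈ s, v2 (f i) a b := by
  unfold v2
  exact Finset.sum_apply _ _ _

lemma ex22 : ∃ u : Hc 2 2, 4 • u = 0 ∧ 2 • u ≠ 0 := by
  refine exists_order4 (CR 2) 2 (by decide) (cls al al_d : groupCohomology TL 2) al_inv ?_
  intro y hy
  obtain ⟨f, h, rfl⟩ := cls_surj (A := TL) (n := 2) y
  have hd : inhomogeneousCochains.d TL 2 (∑ g : C12, pb g f) = 0 := by
    refine (map_sum (inhomogeneousCochains.d TL 2).hom _ _).trans ?_
    exact Finset.sum_eq_zero fun g _ => pb_d g f h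
  have hd6 : inhomogeneousCochains.d TL 2 (6 • al) = 0 := by
    refine (map_nsmul (inhomogeneousCochains.d TL 2).hom 6 al).trans ?_
    refine (congrArg (fun z => 6 • z) al_d).trans (smul_zero _)
  have h2 : ∑ g : C12, (cls (pb g f) (pb_d g f h) : groupCohomology TL 2)
      = 6 • (cls al al_d : groupCohomology TL 2) :=
    (Finset.sum_congr rfl fun g _ => act_cls g f h).symm.trans hy
  rw [cls_sum _ _ _ hd, deg0_nsmul _ hd6] at h2
  obtain ⟨q, hq⟩ := cls_eq.1 h2
  have key : ∀ a b, (∑ g : C12, v2 (pb g f) a b) - 6 * v2 al a b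
      = (∑ g : C12, v2 (pb g f) b a) - 6 * v2 al b a := by
    intro a b
    have := v2_symm q a b
    rw [hq] at this
    have e : ∀ a b, v2 ((∑ g : C12, pb g f) - 6 • al) a b
        = (∑ g : C12, v2 (pb g f) a b) - 6 * v2 al a b := by
      intro a b
      rw [← sum_v2]
      have : (6 : ℕ) • v2 al a b = 6 * v2 al a b := by rw [nsmul_eq_mul]; rfl
      rw [← this]
      rfl
    rw [e, e] at this
    exact this
  have d4 := div4 (fun a b => v2 f a b - v2 f b a) (alt_bilin h) (fun a b => by ring)
  have hre : ∀ i j : Fin 6, ∑ g : C12, v2 (pb g f) (ev i) (ev j)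
      = ∑ m : Fin 12, v2 f (orbN (i.val + m.val)) (orbN (j.val + m.val)) := by
    intro i j
    simp only [v2_pb, ev_orb, orb_pow]
    exact (Equiv.sum_comp (Equiv.inv C12) (fun g : C12 =>
      v2 f (orbN (i.val + ZMod.val g.toAdd)) (orbN (j.val + ZMod.val g.toAdd))))
  have k1 := key (ev 0) (ev 3)
  have k2 := key (ev 0) (ev 2)
  rw [hre, hre] at k1 k2
  have a1 : v2 al (ev 0) (ev 3) = 1 := by rw [v2_al]; decide
  have a2 : v2 al (ev 3) (ev 0) = 0 := by rw [v2_al]; decide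
  have a3 : v2 al (ev 0) (ev 2) = 0 := by rw [v2_al]; decide
  have a4 : v2 al (ev 2) (ev 0) = 0 := by rw [v2_al]; decide
  rw [a1, a2] at k1
  rw [a3, a4] at k2
  have z0 : (0 : Fin 6).val = 0 := rfl
  have z2 : (2 : Fin 6).val = 2 := rfl
  have z3 : (3 : Fin 6).val = 3 := rfl
  simp only [z0, z2, z3, zero_add] at k1 k2
  simp only [Finset.sum_add_distrib, ← Finset.mul_sum, Finset.sum_sub_distrib] at d4
  omega

end Crystal

open Matrix

namespace Crystal

/-- Two distinct elements of order two cannot sit in a cyclic group. -/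
lemma cyc_contra {X : Type*} [AddCommGroup X] (E α β : X) (h h' : ℤ) (hα : α = h • E) (hβ : β = h' • E)
    (tα : (2 : ℤ) • α = 0) (tβ : (2 : ℤ) • β = 0) (nα : α ≠ 0) (nβ : β ≠ 0) (nab : α + β ≠ 0) :
    False := by
  have par : ∀ (x : X), (2 : ℤ) • x = 0 → ∀ n : ℤ, n • x = 0 ∨ n • x = x := by
    intro x hx n
    rcases Int.even_or_odd' n with ⟨m, rfl | rfl⟩
    · left; rw [mul_comm, mul_smul, hx, smul_zero]
    · right; rw [add_smul, mul_comm, mul_smul, hx, smul_zero, one_smul, zero_add]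
  have hg : ((Int.gcd h h' : ℤ)) • E = h.gcdA h' • α + h.gcdB h' • β := by
    rw [Int.gcd_eq_gcd_ab, hα, hβ, add_smul, smul_smul, smul_smul, mul_comm h, mul_comm h']
  set D := ((Int.gcd h h' : ℤ)) • E with hD
  have t : (2 : ℤ) • D = 0 := by
    rw [hg, smul_add, smul_comm, tα, smul_comm, tβ, smul_zero, smul_zero, add_zero]
  obtain ⟨a, ha⟩ := Int.gcd_dvd_left h h'
  obtain ⟨b, hb⟩ := Int.gcd_dvd_right h h'
  have eα : α = a • D := by rw [hα, hD, smul_smul, mul_comm a, ← ha]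
  have eβ : β = b • D := by rw [hβ, hD, smul_smul, mul_comm b, ← hb]
  rcases par D t a with h1 | h1
  · exact nα (eα.trans h1)
  rcases par D t b with h2 | h2
  · exact nβ (eβ.trans h2)
  rw [h1] at eα; rw [h2] at eβ
  apply nab
  rw [eα, eβ, ← two_zsmul, t]

lemma final_abs {X : Type} [AddCommGroup X] {ι : Type} {Y : ι → Type} [∀ i, AddCommGroup (Y i)]
    (e : X ≃+ (∀ i, Y i)) (p q : ι) (hpq : p ≠ q) (u : Y p) (v : Y q)
    (u4 : 4 • u = 0) (u2 : 2 • u ≠ 0) (v4 : 4 • v = 0) (v2 : 2 • v ≠ 0)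
    (E : X) (hE : ∀ x : X, (4 : ℤ) • x = 0 → ∃ h : ℤ, (54 : ℤ) • x = h • E) : False := by
  classical
  let iu := AddMonoidHom.single Y p
  let iv := AddMonoidHom.single Y q
  have key : ∀ y : (∀ i, Y i), 4 • y = 0 →
      (∃ h : ℤ, e.symm (2 • y) = h • E) ∧ (2 : ℤ) • e.symm (2 • y) = 0 := by
    intro y hy
    have h4 : (4 : ℕ) • e.symm y = 0 := by rw [← map_nsmul, hy, map_zero]
    have h4' : (4 : ℤ) • e.symm y = 0 := by
      have := natCast_zsmul (e.symm y) 4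
      rw [h4] at this
      exact this
    constructor
    · obtain ⟨h, hh⟩ := hE (e.symm y) h4'
      refine ⟨h, ?_⟩
      rw [← hh, map_nsmul]
      have : (54 : ℤ) • e.symm y = (2 : ℤ) • e.symm y + (13 : ℤ) • (4 : ℤ) • e.symm y := by
        rw [smul_smul, ← add_smul]; norm_num
      rw [this, h4', smul_zero, add_zero]
      exact (natCast_zsmul (e.symm y) 2).symm
    · rw [map_nsmul, ← natCast_zsmul, smul_smul]
      exact h4'
  obtain ⟨⟨h, hh⟩, tα⟩ := key (iu u) (by rw [← map_nsmul, u4, map_zero])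
  obtain ⟨⟨h', hh'⟩, tβ⟩ := key (iv v) (by rw [← map_nsmul, v4, map_zero])
  have su : iu (2 • u) p = 2 • u := by simp only [iu, iv, AddMonoidHom.single_apply, Pi.single_eq_same]
  have sv : iv (2 • v) q = 2 • v := by simp only [iu, iv, AddMonoidHom.single_apply, Pi.single_eq_same]
  have svp : iv (2 • v) p = 0 := Pi.single_eq_of_ne hpq _
  refine cyc_contra E _ _ h h' hh hh' tα tβ ?_ ?_ ?_
  · intro hz
    rw [EmbeddingLike.map_eq_zero_iff, ← map_nsmul] at hz
    rw [hz] at su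
    exact u2 su.symm
  · intro hz
    rw [EmbeddingLike.map_eq_zero_iff, ← map_nsmul] at hz
    rw [hz] at sv
    exact v2 sv.symm
  · intro hz
    rw [← map_add, EmbeddingLike.map_eq_zero_iff, ← map_nsmul, ← map_nsmul] at hz
    have := congrFun hz p
    rw [Pi.add_apply, su, svp, add_zero] at this
    exact u2 this
end Crystal

theorem Z12_example_fails_conjecture :
    ∃ k : ℕ, ¬ Nonempty
      (H k ≃+ ((p : {p : ℕ × ℕ // p.1 + p.2 = k}) → Hc p.1.1 p.1.2)) := by
  refine ⟨4, ?_⟩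
  rintro ⟨e⟩
  obtain ⟨u, u4, u2⟩ := Crystal.ex22
  obtain ⟨v, v4, v2⟩ := Crystal.ex40
  obtain ⟨E, hE⟩ := Crystal.LHS
  exact Crystal.final_abs (Y := fun p : {p : ℕ × ℕ // p.1 + p.2 = 4} => Hc p.1.1 p.1.2) e
    ⟨(2, 2), rfl⟩ ⟨(4, 0), rfl⟩ (by decide) u v u4 u2 v4 v2 E hE
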